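/- arXiv:2006.04799 — 5 statements merged into one kernel-verified Lean document; each statement's English description precedes it below -/
import Mathlib

section
/- The class of finite-dimensional complex normed spaces satisfies the discrete approximate Ramsey property: for all finite-dimensional complex normed spaces X and Y, every r ∈ ℕ, and every ε > 0, there exists a finite-dimensional complex normed space Z such that for every coloring c of the set of linear isometric embeddings of X into Z with r colors there exist a linear isometric embedding γ : Y → Z and a color j such that for every linear isometric embedding η : X → Y there is a linear isometric embedding ξ : X → Z with c(ξ) = j and ‖γ ∘ η − ξ‖ ≤ ε (operator norm). -/
universe u

/-!
For finitely many permutations `σ_k` of a finite set `G`, concentration of measure on `G^n` gives a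
Ramsey theorem: for large `n`, every finite colouring of `G^n` has a colour `j` and a point `g` such
that all the points `σ_k g` are within Hamming distance `δ n` of the colour `j`. This passes to
isometric embeddings by sending `g` to the `ℓ¹`-average of the `γ (g i)`, for a finite
family `γ` of isometric embeddings of `Y` satisfying `γ (σ_k g) ∘ η₀ ≈ γ g ∘ η_k`, where the `η_k`
form a net of the isometric embeddings of `X` into `Y`.

To build `γ`, start from a functional `s` of norm at most one and use Hahn–Banach along the Cayley
tree of the free group on the indices `k` to get functionals `F_s g` with `F_s 1 = s` and
`F_s (k g) ∘ η₀ = F_s g ∘ η_k`. Multiplying by a slowly varying tent function makes the family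
finitely supported at a small cost, so that left multiplication by `k` can be replaced by a
permutation of a finite ball; `G` is the group of permutations of this ball, and `γ g` has the
coordinates `F_s (g v)` for `v` in the ball and all `s`.
-/

universe v w t

section Concentration

variable {ι κ : Type*} [Fintype ι] [Fintype κ]

theorem sum_sum_sub_sq (f : ι → ℝ) :
    ∑ x, ∑ y, (f x - f y) ^ 2 = 2 * (Fintype.card ι * ∑ x, f x ^ 2 - (∑ x, f x) ^ 2) := by
  simp only [sub_sq, Finset.sum_add_distrib, Finset.sum_sub_distrib, Finset.sum_const,
    Finset.card_univ, nsmul_eq_mul, ← Finset.mul_sum, ← Finset.sum_mul]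
  ring

-- The law of total variance, with variances written as sums over pairs.
theorem sum_sum_sub_sq_prod (f : ι × κ → ℝ) :
    ∑ p, ∑ q, (f p - f q) ^ 2 =
      Fintype.card ι * ∑ a, ∑ b, ∑ b', (f (a, b) - f (a, b')) ^ 2 +
        ∑ a, ∑ a', (∑ b, f (a, b) - ∑ b, f (a', b)) ^ 2 := by
  rw [sum_sum_sub_sq]
  simp only [sum_sum_sub_sq, Fintype.sum_prod_type, ← Finset.mul_sum, Finset.sum_sub_distrib,
    Fintype.card_prod, Nat.cast_mul]
  ring

theorem sum_sum_sub_sq_le_of_abs_update_sub_le {n : ℕ} {α : Fin n → Type*} [∀ i, Fintype (α i)]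
    (f : (∀ i, α i) → ℝ) (c : Fin n → ℝ)
    (hf : ∀ x i a, |f (Function.update x i a) - f x| ≤ c i) :
    ∑ x, ∑ y, (f x - f y) ^ 2 ≤ (∑ i, c i ^ 2) * Fintype.card (∀ i, α i) ^ 2 := by
  induction n with
  | zero => simp
  | succ n ih =>
    let F (p : α 0 × ∀ i : Fin n, α i.succ) : ℝ := f (Fin.cons p.1 p.2)
    set m : ℝ := (Fintype.card (α 0) : ℝ)
    set N : ℝ := (Fintype.card (∀ i : Fin n, α i.succ) : ℝ)
    have card_eq : (Fintype.card (∀ i, α i) : ℝ) = m * N := by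
      rw [← Nat.cast_mul, ← Fintype.card_prod, Fintype.card_congr (Fin.consEquiv α)]
    have tail_le (a : α 0) : ∑ x, ∑ y, (F (a, x) - F (a, y)) ^ 2 ≤
        (∑ i : Fin n, c i.succ ^ 2) * N ^ 2 :=
      ih (fun x ↦ F (a, x)) (fun i ↦ c i.succ) fun x i b ↦ by
        simpa only [F, Fin.cons_update] using hf (Fin.cons a x) i.succ b
    have head_le (a a' : α 0) : (∑ x, F (a, x) - ∑ x, F (a', x)) ^ 2 ≤ (c 0 * N) ^ 2 := by
      rw [← sq_abs, ← Finset.sum_sub_distrib]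
      gcongr
      calc |∑ x, (F (a, x) - F (a', x))| ≤ ∑ x, |F (a, x) - F (a', x)| :=
            Finset.abs_sum_le_sum_abs _ _
        _ ≤ ∑ _x : ∀ i : Fin n, α i.succ, c 0 := Finset.sum_le_sum fun x _ ↦ by
            simpa only [F, Fin.update_cons_zero] using hf (Fin.cons a' x) 0 a
        _ = c 0 * N := by simp [N, mul_comm]
    calc ∑ x, ∑ y, (f x - f y) ^ 2 = ∑ p, ∑ q, (F p - F q) ^ 2 := by
          simp only [← (Fin.consEquiv α).sum_comp]; rfl
      _ = m * ∑ a, ∑ x, ∑ y, (F (a, x) - F (a, y)) ^ 2 +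
            ∑ a, ∑ a', (∑ x, F (a, x) - ∑ x, F (a', x)) ^ 2 := sum_sum_sub_sq_prod F
      _ ≤ m * ∑ _a : α 0, (∑ i : Fin n, c i.succ ^ 2) * N ^ 2 +
            ∑ _a : α 0, ∑ _a' : α 0, (c 0 * N) ^ 2 := by
          gcongr m * ?_ + ?_
          · exact Finset.sum_le_sum fun a _ ↦ tail_le a
          · exact Finset.sum_le_sum fun a _ ↦ Finset.sum_le_sum fun a' _ ↦ head_le a a'
      _ = (∑ i, c i ^ 2) * Fintype.card (∀ i, α i) ^ 2 := by
          rw [card_eq, Fin.sum_univ_succ]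
          simp only [Finset.sum_const, Finset.card_univ, nsmul_eq_mul]
          ring

theorem hammingDist_update_self_le_one [DecidableEq ι] {α : ι → Type*} [∀ i, DecidableEq (α i)]
    (x : ∀ i, α i) (i : ι) (a : α i) : hammingDist (Function.update x i a) x ≤ 1 := by
  refine (Finset.card_le_card fun j hj ↦ ?_).trans (Finset.card_singleton i).le
  by_contra hji
  simp_all [Function.update_of_ne]

-- The bounded differences inequality is applied to the distance to `A`.
theorem card_mul_card_mul_sq_le_of_le_hammingDist {n : ℕ} {α : Fin n → Type*} [∀ i, Fintype (α i)]
    [∀ i, DecidableEq (α i)] (A B : Finset (∀ i, α i)) {t : ℝ} (ht : 0 ≤ t)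
    (hAB : ∀ a ∈ A, ∀ b ∈ B, t ≤ hammingDist b a) :
    A.card * B.card * t ^ 2 ≤ n * (Fintype.card (∀ i, α i) : ℝ) ^ 2 := by
  let f (x : ∀ i, α i) : ℝ := Metric.infDist (Hamming.toHamming x) (Hamming.toHamming '' A)
  have abs_update_sub_le (x : ∀ i, α i) (i : Fin n) (a : α i) :
      |f (Function.update x i a) - f x| ≤ 1 := by
    refine ((Metric.lipschitz_infDist_pt _).dist_le_mul _ _).trans ?_
    simpa using hammingDist_update_self_le_one x i a
  have sq_le_of_mem : ∀ a ∈ A, ∀ b ∈ B, t ^ 2 ≤ (f a - f b) ^ 2 := by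
    intro a ha b hb
    have hfa : f a = 0 := Metric.infDist_zero_of_mem (Set.mem_image_of_mem _ ha)
    have hfb : t ≤ f b := (Metric.le_infDist ⟨_, Set.mem_image_of_mem _ ha⟩).2 <|
      Set.forall_mem_image.2 fun a' ha' ↦ hAB a' ha' b hb
    rw [hfa, zero_sub, neg_sq]
    gcongr
  calc A.card * B.card * t ^ 2 = ∑ _p ∈ A ×ˢ B, t ^ 2 := by simp
    _ ≤ ∑ p ∈ A ×ˢ B, (f p.1 - f p.2) ^ 2 := Finset.sum_le_sum fun p hp ↦
        sq_le_of_mem _ (Finset.mem_product.1 hp).1 _ (Finset.mem_product.1 hp).2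
    _ ≤ ∑ p : (∀ i, α i) × (∀ i, α i), (f p.1 - f p.2) ^ 2 :=
        Finset.sum_le_univ_sum_of_nonneg fun _ ↦ sq_nonneg _
    _ = ∑ a, ∑ b, (f a - f b) ^ 2 := Fintype.sum_prod_type _
    _ ≤ (∑ _i : Fin n, 1 ^ 2) * (Fintype.card (∀ i, α i) : ℝ) ^ 2 :=
        sum_sum_sub_sq_le_of_abs_update_sub_le f (fun _ ↦ 1) abs_update_sub_le
    _ = n * (Fintype.card (∀ i, α i) : ℝ) ^ 2 := by simp

theorem mul_card_lt_card_of_le_hammingDist {n : ℕ} {α : Fin n → Type*} [∀ i, Fintype (α i)]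
    [∀ i, DecidableEq (α i)] [∀ i, Nonempty (α i)] {A B : Finset (∀ i, α i)} {q r : ℕ} {δ : ℝ}
    (hδ : 0 < δ) (hn : q * r < n * δ ^ 2) (hA : Fintype.card (∀ i, α i) ≤ q * A.card)
    (hAB : ∀ a ∈ A, ∀ b ∈ B, δ * n ≤ hammingDist b a) :
    r * B.card < Fintype.card (∀ i, α i) := by
  by_contra! hB
  have card_pos : 0 < Fintype.card (∀ i, α i) := Fintype.card_pos
  have A_pos : 0 < A.card := Nat.pos_of_mul_pos_left (card_pos.trans_le hA)
  have B_pos : 0 < B.card := Nat.pos_of_mul_pos_left (card_pos.trans_le hB)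
  have n_pos : (0 : ℝ) < n := pos_of_mul_pos_left (hn.trans_le' (by positivity)) (by positivity)
  have hA' : (Fintype.card (∀ i, α i) : ℝ) ≤ q * A.card := mod_cast hA
  have hB' : (Fintype.card (∀ i, α i) : ℝ) ≤ r * B.card := mod_cast hB
  set N : ℝ := (Fintype.card (∀ i, α i) : ℝ)
  refine lt_irrefl (n * N ^ 2) ?_
  calc n * N ^ 2 = n * (N * N) := by ring
    _ ≤ n * ((q * A.card) * (r * B.card)) := by gcongr
    _ = n * (A.card * B.card) * (q * r) := by ring
    _ < n * (A.card * B.card) * (n * δ ^ 2) := by gcongr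
    _ = A.card * B.card * (δ * n) ^ 2 := by ring
    _ ≤ n * N ^ 2 := card_mul_card_mul_sq_le_of_le_hammingDist A B (by positivity) hAB

theorem exists_forall_apply_notMem {Ω : Type*} [Fintype Ω] (σ : κ → Equiv.Perm Ω) (B : Finset Ω)
    (hB : Fintype.card κ * B.card < Fintype.card Ω) : ∃ x, ∀ k, σ k x ∉ B := by
  classical
  by_contra! hcov
  refine hB.not_ge ?_
  calc Fintype.card Ω ≤ (Finset.univ.biUnion fun k ↦ B.map (σ k).symm.toEmbedding).card :=
        Finset.card_le_card fun x _ ↦ by simpa [Equiv.symm_apply_eq] using hcov x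
    _ ≤ Fintype.card κ * B.card := by
        simpa using Finset.card_biUnion_le (s := Finset.univ)
          (t := fun k ↦ B.map (σ k).symm.toEmbedding)

/- The permutations preserve the counting measure, and by concentration the set of points far from a
large colour class is too small to contain an image of every point. -/
theorem exists_monochromatic_hammingDist_le {G K C : Type*} [Finite G] [DecidableEq G] [Nonempty G]
    [Finite K] [Finite C] (σ : K → Equiv.Perm G) {δ : ℝ} (hδ : 0 < δ) :
    ∃ n : ℕ, 0 < n ∧ ∀ c : (Fin n → G) → C, ∃ (g : Fin n → G) (j : C), ∀ k,
      ∃ h, c h = j ∧ (hammingDist (fun i ↦ σ k (g i)) h : ℝ) ≤ δ * n := by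
  classical
  have := Fintype.ofFinite G
  have := Fintype.ofFinite K
  have := Fintype.ofFinite C
  obtain ⟨n, hn⟩ := exists_nat_gt ((Fintype.card C : ℝ) * Fintype.card K / δ ^ 2)
  have n_pos : (0 : ℝ) < n := hn.trans_le' (by positivity)
  refine ⟨n, mod_cast n_pos, fun c ↦ ?_⟩
  have : Nonempty C := ⟨c fun _ ↦ Classical.arbitrary G⟩
  obtain ⟨j, hj⟩ := Fintype.exists_le_card_fiber_of_nsmul_le_card c
    (b := (Fintype.card (Fin n → G) : ℝ) / Fintype.card C) (by simp [mul_div_cancel₀])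
  let A : Finset (Fin n → G) := {x | c x = j}
  let B : Finset (Fin n → G) := {x | ∀ a ∈ A, δ * n ≤ hammingDist x a}
  have le_card_A : Fintype.card (Fin n → G) ≤ Fintype.card C * A.card := by
    rw [div_le_iff₀' (by positivity)] at hj
    exact_mod_cast hj
  have card_B_lt : Fintype.card K * B.card < Fintype.card (Fin n → G) :=
    mul_card_lt_card_of_le_hammingDist hδ ((div_lt_iff₀ (by positivity)).1 hn) le_card_A
      fun a ha b hb ↦ (Finset.mem_filter.1 hb).2 a ha
  obtain ⟨g, hg⟩ := exists_forall_apply_notMem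
    (fun k ↦ Equiv.piCongrRight fun _ : Fin n ↦ σ k) B card_B_lt
  refine ⟨g, j, fun k ↦ ?_⟩
  obtain ⟨h, hA, hlt⟩ : ∃ h ∈ A, (hammingDist (fun i ↦ σ k (g i)) h : ℝ) < δ * n := by
    simpa [B] using! hg k
  exact ⟨h, by simpa [A] using hA, hlt.le⟩

end Concentration

section FreeGroup

-- The Cayley graph of a free group is a tree, so a path in `P` can be extended step by step.
theorem exists_freeGroup_map_of_biTotal {K P : Type*} (R : K → P → P → Prop)
    (hR : ∀ k, Relator.BiTotal (R k)) (p₀ : P) :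
    ∃ F : FreeGroup K → P, F 1 = p₀ ∧ ∀ k g, R k (F g) (F (FreeGroup.of k * g)) := by
  classical
  choose next hnext using fun k ↦ (hR k).1
  choose prev hprev using fun k ↦ (hR k).2
  let step (a : K × Bool) (p : P) : P := if a.2 then next a.1 p else prev a.1 p
  refine ⟨fun g ↦ g.toWord.foldr step p₀, by simp, fun k g ↦ ?_⟩
  have toWord_eq : (FreeGroup.of k * g).toWord = FreeGroup.reduce ((k, true) :: g.toWord) := by
    rw [FreeGroup.toWord_mul, FreeGroup.toWord_of, List.singleton_append]
  beta_reduce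
  rw [toWord_eq, FreeGroup.reduce.cons, FreeGroup.reduce_toWord]
  rcases g.toWord with _ | ⟨⟨l, b⟩, w⟩
  · exact hnext k _
  · by_cases hcancel : k = l ∧ b = false
    · obtain ⟨rfl, rfl⟩ := hcancel
      simpa [step] using hprev k _
    · simpa [step, hcancel] using hnext k _

theorem finite_setOf_freeGroup_norm_le (K : Type*) [Finite K] [DecidableEq K] (R : ℕ) :
    {g : FreeGroup K | g.norm ≤ R}.Finite :=
  (List.finite_length_le (K × Bool) R).preimage FreeGroup.toWord_injective.injOn

theorem exists_perm_eq_mul_or_notMem {Γ : Type*} [Group Γ] (B : Set Γ) [Finite B] (a : Γ) :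
    ∃ π : Equiv.Perm B, ∀ v, (π v : Γ) = a * v ∨ a * v ∉ B ∧ a⁻¹ * π v ∉ B := by
  classical
  let e : {v : B // a * v ∈ B} ≃ {v : B // a⁻¹ * v ∈ B} :=
    { toFun v := ⟨⟨a * v, v.2⟩, by simp⟩
      invFun v := ⟨⟨a⁻¹ * v, v.2⟩, by simp⟩
      left_inv v := by simp
      right_inv v := by simp }
  refine ⟨e.extendSubtype, fun v ↦ ?_⟩
  by_cases hv : a * v ∈ B
  · exact .inl (by rw [e.extendSubtype_apply_of_mem v hv]; rfl)
  · exact .inr ⟨hv, e.extendSubtype_not_mem v hv⟩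

theorem exists_perm_norm_sub_le {Γ : Type*} (E : Type*) [Group Γ] [SeminormedAddCommGroup E]
    (B : Set Γ) [Finite B] (a : Γ) :
    ∃ π : Equiv.Perm B, ∀ (p q : Γ → E) (δ : ℝ), (∀ g ∉ B, p g = 0) → (∀ g ∉ B, q g = 0) →
      (∀ g, ‖p (a * g) - q g‖ ≤ δ) → ∀ v, ‖p (π v) - q v‖ ≤ 2 * δ := by
  obtain ⟨π, hπ⟩ := exists_perm_eq_mul_or_notMem B a
  refine ⟨π, fun p q δ hp hq hpq v ↦ ?_⟩
  rcases hπ v with h | ⟨hv, hπv⟩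
  · have := hpq v
    rw [h]
    linarith [norm_nonneg (p (a * v) - q v)]
  · have hp_le : ‖p (π v)‖ ≤ δ := by simpa [hq _ hπv] using hpq (a⁻¹ * π v)
    have hq_le : ‖q v‖ ≤ δ := by simpa [hp _ hv] using hpq v
    linarith [norm_sub_le (p (π v)) (q v)]

/-- A tent function on the free group, equal to `1` at the identity and supported in the ball of
radius `R`; multiplying by it makes a family indexed by the free group finitely supported. For
`R = 0` it is constantly `1`, by the convention on division by zero. -/
noncomputable def tent {K : Type*} [DecidableEq K] (R : ℕ) (g : FreeGroup K) : ℝ :=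
  max 0 (1 - g.norm / R)

section tent

variable {K : Type*} [DecidableEq K] {R : ℕ}

theorem tent_nonneg (R : ℕ) (g : FreeGroup K) : 0 ≤ tent R g := le_max_left _ _

theorem tent_le_one (R : ℕ) (g : FreeGroup K) : tent R g ≤ 1 :=
  max_le zero_le_one (sub_le_self _ (by positivity))

theorem tent_one (R : ℕ) : tent R (1 : FreeGroup K) = 1 := by simp [tent]

theorem tent_eq_zero (hR : R ≠ 0) {g : FreeGroup K} (hg : R ≤ g.norm) : tent R g = 0 :=
  max_eq_left (sub_nonpos.2 ((one_le_div₀ (by positivity)).2 (mod_cast hg)))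

theorem abs_tent_of_mul_sub_le (R : ℕ) (k : K) (g : FreeGroup K) :
    |tent R (FreeGroup.of k * g) - tent R g| ≤ 1 / R := by
  have norm_le (a h : FreeGroup K) : ((a * h).norm : ℝ) ≤ a.norm + h.norm :=
    mod_cast FreeGroup.norm_mul_le a h
  have h_mul := norm_le (FreeGroup.of k) g
  have h_inv := norm_le (FreeGroup.of k)⁻¹ (FreeGroup.of k * g)
  rw [FreeGroup.norm_of] at h_mul
  rw [inv_mul_cancel_left, FreeGroup.norm_inv_eq, FreeGroup.norm_of] at h_inv
  simp only [tent, max_comm (0 : ℝ)]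
  refine (abs_max_sub_max_le_abs _ _ _).trans ?_
  rw [sub_sub_sub_cancel_left, ← sub_div, abs_div, Nat.abs_cast]
  gcongr
  rw [abs_le]
  constructor <;> push_cast at * <;> linarith

end tent

end FreeGroup

section Functionals

variable {𝕜 X Y : Type*} [RCLike 𝕜] [NormedAddCommGroup X] [NormedSpace 𝕜 X]
  [NormedAddCommGroup Y] [NormedSpace 𝕜 Y]

-- `g` is a Hahn–Banach extension of `f ∘ θ ∘ η⁻¹` from the range of `η`.
theorem exists_strongDual_apply_eq_apply (η θ : X →ₗᵢ[𝕜] Y) (f : StrongDual 𝕜 Y) :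
    ∃ g : StrongDual 𝕜 Y, (∀ x, g (η x) = f (θ x)) ∧ ‖g‖ ≤ ‖f‖ := by
  let ψ : η.range →ₗᵢ[𝕜] Y := θ.comp η.equivRange.symm.toLinearIsometry
  have ψ_apply (x : X) : ψ (η.equivRange x) = θ x := by simp [ψ]
  obtain ⟨g, hg, norm_g⟩ := exists_extension_norm_eq η.range (f.comp ψ.toContinuousLinearMap)
  refine ⟨g, fun x ↦ ?_, norm_g.trans_le ?_⟩
  · exact (hg (η.equivRange x)).trans (congrArg f (ψ_apply x))
  · refine ContinuousLinearMap.opNorm_le_bound _ (norm_nonneg f) fun y ↦ ?_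
    simpa using f.le_opNorm (ψ y)

theorem exists_freeGroup_strongDual {K : Type*} (η₀ : X →ₗᵢ[𝕜] Y) (η : K → X →ₗᵢ[𝕜] Y)
    {s : StrongDual 𝕜 Y} (hs : ‖s‖ ≤ 1) :
    ∃ F : FreeGroup K → StrongDual 𝕜 Y, F 1 = s ∧ (∀ g, ‖F g‖ ≤ 1) ∧
      ∀ k g x, F (FreeGroup.of k * g) (η₀ x) = F g (η k x) := by
  let P := {f : StrongDual 𝕜 Y // ‖f‖ ≤ 1}
  have biTotal (k : K) : Relator.BiTotal fun p q : P ↦ ∀ x, q.1 (η₀ x) = p.1 (η k x) := by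
    refine ⟨fun p ↦ ?_, fun q ↦ ?_⟩
    · obtain ⟨f, hf, norm_f⟩ := exists_strongDual_apply_eq_apply η₀ (η k) p.1
      exact ⟨⟨f, norm_f.trans p.2⟩, hf⟩
    · obtain ⟨f, hf, norm_f⟩ := exists_strongDual_apply_eq_apply (η k) η₀ q.1
      exact ⟨⟨f, norm_f.trans q.2⟩, fun x ↦ (hf x).symm⟩
  obtain ⟨F, F_one, hF⟩ := exists_freeGroup_map_of_biTotal _ biTotal ⟨s, hs⟩
  exact ⟨fun g ↦ (F g).1, congrArg Subtype.val F_one, fun g ↦ (F g).2, hF⟩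

theorem exists_finitelySupported_freeGroup_strongDual {K : Type*} [DecidableEq K]
    (η₀ : X →ₗᵢ[𝕜] Y) (η : K → X →ₗᵢ[𝕜] Y) {s : StrongDual 𝕜 Y} (hs : ‖s‖ ≤ 1) {R : ℕ}
    (hR : R ≠ 0) :
    ∃ F : FreeGroup K → StrongDual 𝕜 Y, F 1 = s ∧ (∀ g, ‖F g‖ ≤ 1) ∧
      (∀ g, R ≤ g.norm → F g = 0) ∧
      ∀ k g x, ‖F (FreeGroup.of k * g) (η₀ x) - F g (η k x)‖ ≤ 1 / R * ‖x‖ := by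
  obtain ⟨F, F_one, norm_F, hF⟩ := exists_freeGroup_strongDual η₀ η hs
  refine ⟨fun g ↦ tent R g • F g, ?_, fun g ↦ ?_, fun g hg ↦ ?_, fun k g x ↦ ?_⟩
  · simp [tent_one, F_one]
  · rw [norm_smul, Real.norm_of_nonneg (tent_nonneg R g)]
    exact mul_le_one₀ (tent_le_one R g) (norm_nonneg _) (norm_F g)
  · ext y
    simp [tent_eq_zero hR hg]
  · simp only [smul_apply, hF, ← sub_smul, norm_smul, Real.norm_eq_abs]
    gcongr
    · exact abs_tent_of_mul_sub_le R k g
    · simpa using (F g).le_of_opNorm_le (norm_F g) (η k x)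

end Functionals

section Isometries

open scoped ENNReal

variable {𝕜 : Type w} {X : Type u} {Y : Type v} [RCLike 𝕜] [NormedAddCommGroup X] [NormedSpace 𝕜 X]
  [NormedAddCommGroup Y] [NormedSpace 𝕜 Y]

theorem memℓp_infty_apply {T : Type*} {Φ : T → StrongDual 𝕜 Y} (hΦ : ∀ t, ‖Φ t‖ ≤ 1) (y : Y) :
    Memℓp (fun t ↦ Φ t y) ∞ :=
  memℓp_infty ⟨‖y‖, Set.forall_mem_range.2 fun t ↦ by simpa using (Φ t).le_of_opNorm_le (hΦ t) y⟩

/-- The isometric embedding `y ↦ (Φ t y)_t` into `ℓ^∞(T)` given by a norming family `Φ` of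
functionals. -/
noncomputable def normingIsometry {T : Type*} (Φ : T → StrongDual 𝕜 Y) (hΦ : ∀ t, ‖Φ t‖ ≤ 1)
    (hnorming : ∀ y, ∃ t, ‖y‖ ≤ ‖Φ t y‖) : Y →ₗᵢ[𝕜] lp (fun _ : T ↦ 𝕜) ∞ where
  toFun y := ⟨fun t ↦ Φ t y, memℓp_infty_apply hΦ y⟩
  map_add' y z := by ext t; exact map_add (Φ t) y z
  map_smul' a y := by ext t; exact map_smul (Φ t) a y
  norm_map' y := by
    refine le_antisymm (lp.norm_le_of_forall_le (norm_nonneg y) fun t ↦ ?_) ?_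
    · simpa using (Φ t).le_of_opNorm_le (hΦ t) y
    · obtain ⟨t, ht⟩ := hnorming y
      exact ht.trans <| lp.norm_apply_le_norm ENNReal.top_ne_zero ⟨_, memℓp_infty_apply hΦ y⟩ t

theorem exists_finiteDimensional_corestrict {ι E : Type*} [Finite ι] [NormedAddCommGroup E]
    [NormedSpace 𝕜 E] [FiniteDimensional 𝕜 Y] (γ : ι → Y →ₗᵢ[𝕜] E) :
    ∃ (W : Submodule 𝕜 E) (_ : FiniteDimensional 𝕜 W) (γ' : ι → Y →ₗᵢ[𝕜] W),
      ∀ i y, (γ' i y : E) = γ i y := by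
  let W : Submodule 𝕜 E := ⨆ i, (γ i).range
  have mem_W (i : ι) (y : Y) : γ i y ∈ W :=
    le_iSup (fun i ↦ (γ i).range) i ⟨y, rfl⟩
  exact ⟨W, inferInstance, fun i ↦ ⟨(γ i).toLinearMap.codRestrict W (mem_W i), (γ i).norm_map⟩,
    fun _ _ ↦ rfl⟩

-- A permutation `g` of the ball is sent to the family of all `F s (g v)`.
theorem exists_perm_linearIsometry_lp {K : Type t} [Finite K] (η₀ : X →ₗᵢ[𝕜] Y)
    (η : K → X →ₗᵢ[𝕜] Y) {R : ℕ} (hR : R ≠ 0) :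
    ∃ (G : Type t) (T : Type (max t v w)) (_ : Finite G) (_ : Nonempty G) (σ : K → Equiv.Perm G)
      (γ : G → Y →ₗᵢ[𝕜] lp (fun _ : T ↦ 𝕜) ∞),
      ∀ k g x, ‖γ (σ k g) (η₀ x) - γ g (η k x)‖ ≤ 2 * (1 / R * ‖x‖) := by
  classical
  let S := {s : StrongDual 𝕜 Y // ‖s‖ ≤ 1}
  choose F F_one norm_F F_zero hF using fun s : S ↦
    exists_finitelySupported_freeGroup_strongDual η₀ η s.2 hR
  let B : Set (FreeGroup K) := {g | g.norm ≤ R}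
  have : Finite B := finite_setOf_freeGroup_norm_le K R
  have F_zero' (s : S) (g : FreeGroup K) (hg : g ∉ B) : F s g = 0 := F_zero s g (not_le.1 hg).le
  choose π hπ using fun k : K ↦ exists_perm_norm_sub_le 𝕜 B (FreeGroup.of k)
  let Φ (g : Equiv.Perm B) (t : B × S) : StrongDual 𝕜 Y := F t.2 (g t.1)
  have norming (g : Equiv.Perm B) (y : Y) : ∃ t, ‖y‖ ≤ ‖Φ g t y‖ := by
    obtain ⟨s, norm_s, hs⟩ := exists_dual_vector'' 𝕜 y
    exact ⟨(g.symm ⟨1, by simp [B]⟩, ⟨s, norm_s⟩), by simp [Φ, F_one, hs]⟩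
  refine ⟨Equiv.Perm B, B × S, inferInstance, inferInstance, fun k ↦ Equiv.mulLeft (π k),
    fun g ↦ normingIsometry (Φ g) (fun t ↦ norm_F _ _) (norming g), fun k g x ↦ ?_⟩
  refine lp.norm_le_of_forall_le (by positivity) fun ⟨v, s⟩ ↦ ?_
  exact hπ k (fun h ↦ F s h (η₀ x)) (fun h ↦ F s h (η k x)) _
    (fun h hh ↦ by simp [F_zero' s h hh]) (fun h hh ↦ by simp [F_zero' s h hh])
    (fun h ↦ hF s k h x) (g v)

theorem exists_finite_almost_homogeneous_family {K : Type t} [Finite K] [FiniteDimensional 𝕜 Y]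
    (η₀ : X →ₗᵢ[𝕜] Y) (η : K → X →ₗᵢ[𝕜] Y) {ε : ℝ} (hε : 0 < ε) :
    ∃ (G : Type t) (W : Type (max t v w)) (_ : Finite G) (_ : Nonempty G) (_ : NormedAddCommGroup W)
      (_ : NormedSpace 𝕜 W) (_ : FiniteDimensional 𝕜 W) (σ : K → Equiv.Perm G)
      (γ : G → Y →ₗᵢ[𝕜] W), ∀ k g x, ‖γ (σ k g) (η₀ x) - γ g (η k x)‖ ≤ ε * ‖x‖ := by
  obtain ⟨R, hR⟩ := exists_nat_gt (2 / ε)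
  have R_pos : (0 : ℝ) < R := hR.trans' (by positivity)
  have two_div_le : 2 / (R : ℝ) ≤ ε := ((div_lt_comm₀ hε R_pos).1 hR).le
  obtain ⟨G, T, _, _, σ, γ, hγ⟩ := exists_perm_linearIsometry_lp η₀ η (mod_cast R_pos.ne')
  obtain ⟨W, _, γ', coe_γ'⟩ := exists_finiteDimensional_corestrict γ
  refine ⟨G, W, ‹_›, ‹_›, inferInstance, inferInstance, ‹_›, σ, γ', fun k g x ↦ ?_⟩
  calc ‖γ' (σ k g) (η₀ x) - γ' g (η k x)‖ = ‖γ (σ k g) (η₀ x) - γ g (η k x)‖ := by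
        rw [Submodule.coe_norm, Submodule.coe_sub, coe_γ', coe_γ']
    _ ≤ 2 / R * ‖x‖ := (hγ k g x).trans_eq (by ring)
    _ ≤ ε * ‖x‖ := by gcongr

theorem exists_finite_net_linearIsometry [FiniteDimensional 𝕜 X] [FiniteDimensional 𝕜 Y] {ε : ℝ}
    (hε : 0 < ε) :
    ∃ t : Set (X →ₗᵢ[𝕜] Y), t.Finite ∧ ∀ θ : X →ₗᵢ[𝕜] Y, ∃ η ∈ t, ∀ x, ‖θ x - η x‖ ≤ ε * ‖x‖ := by
  let ψ : (X →ₗᵢ[𝕜] Y) → (X →L[𝕜] Y) := LinearIsometry.toContinuousLinearMap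
  have : ProperSpace (X →L[𝕜] Y) := FiniteDimensional.proper 𝕜 _
  have totallyBounded : TotallyBounded (Set.range ψ) := by
    refine (isCompact_closedBall (0 : X →L[𝕜] Y) 1).totallyBounded.subset ?_
    rintro _ ⟨θ, rfl⟩
    simpa using θ.norm_toContinuousLinearMap_le
  obtain ⟨t, ht_sub, ht_fin, ht⟩ := Metric.finite_approx_of_totallyBounded totallyBounded ε hε
  refine ⟨ψ ⁻¹' t, ht_fin.preimage LinearIsometry.toContinuousLinearMap_injective.injOn,
    fun θ ↦ ?_⟩
  obtain ⟨f, hf, dist_lt⟩ := Set.mem_iUnion₂.1 (ht (Set.mem_range_self θ))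
  obtain ⟨η, rfl⟩ := ht_sub hf
  rw [Metric.mem_ball, dist_eq_norm] at dist_lt
  exact ⟨η, hf, fun x ↦ (ψ θ - ψ η).le_of_opNorm_le dist_lt.le x⟩

end Isometries

section Average

variable {𝕜 Y W ι : Type*} [RCLike 𝕜] [NormedAddCommGroup Y] [NormedSpace 𝕜 Y]
  [NormedAddCommGroup W] [NormedSpace 𝕜 W] [Fintype ι] [Nonempty ι]

/-- The `ℓ¹`-average of a finite family of isometric embeddings, that is, the diagonal embedding
into the `ℓ¹`-sum of copies of the target, divided by the number of copies. -/
noncomputable def averageIsometry (γ : ι → Y →ₗᵢ[𝕜] W) : Y →ₗᵢ[𝕜] PiLp 1 (fun _ : ι ↦ W) where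
  toLinearMap := (Fintype.card ι : 𝕜)⁻¹ •
    (WithLp.linearEquiv 1 𝕜 (ι → W)).symm.toLinearMap ∘ₗ LinearMap.pi fun i ↦ (γ i).toLinearMap
  norm_map' y := by simp [norm_smul, PiLp.norm_eq_of_L1]

theorem norm_averageIsometry_sub (γ γ' : ι → Y →ₗᵢ[𝕜] W) (y y' : Y) :
    ‖averageIsometry γ y - averageIsometry γ' y'‖ =
      (Fintype.card ι : ℝ)⁻¹ * ∑ i, ‖γ i y - γ' i y'‖ := by
  simp [averageIsometry, ← smul_sub, norm_smul, PiLp.norm_eq_of_L1]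

theorem norm_averageIsometry_sub_le {γ γ' : ι → Y →ₗᵢ[𝕜] W} {y y' : Y} {b : ℝ}
    (h : ∀ i, ‖γ i y - γ' i y'‖ ≤ b) : ‖averageIsometry γ y - averageIsometry γ' y'‖ ≤ b := by
  rw [norm_averageIsometry_sub, inv_mul_le_iff₀ (by simp [Fintype.card_pos])]
  simpa using Finset.sum_le_sum fun i (_ : i ∈ Finset.univ) ↦ h i

theorem norm_averageIsometry_sub_le_hammingDist {G : Type*} [DecidableEq G] (γ : G → Y →ₗᵢ[𝕜] W)
    (g h : ι → G) (y : Y) :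
    ‖averageIsometry (fun i ↦ γ (g i)) y - averageIsometry (fun i ↦ γ (h i)) y‖ ≤
      2 * (hammingDist g h / Fintype.card ι) * ‖y‖ := by
  have norm_sub_le_ite (i : ι) : ‖γ (g i) y - γ (h i) y‖ ≤ if g i ≠ h i then 2 * ‖y‖ else 0 := by
    split_ifs with hi
    · exact (norm_sub_le _ _).trans_eq (by simp [two_mul])
    · simp [not_not.1 hi]
  have sum_le : ∑ i, ‖γ (g i) y - γ (h i) y‖ ≤ hammingDist g h * (2 * ‖y‖) := by
    simpa [hammingDist, Finset.sum_ite] using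
      Finset.sum_le_sum fun i (_ : i ∈ Finset.univ) ↦ norm_sub_le_ite i
  rw [norm_averageIsometry_sub]
  calc (Fintype.card ι : ℝ)⁻¹ * ∑ i, ‖γ (g i) y - γ (h i) y‖
      ≤ (Fintype.card ι : ℝ)⁻¹ * (hammingDist g h * (2 * ‖y‖)) := by gcongr
    _ = 2 * (hammingDist g h / Fintype.card ι) * ‖y‖ := by ring

end Average

section Ramsey

variable {𝕜 : Type w} [RCLike 𝕜]

theorem exists_approx_monochromatic_of_finite {X : Type u} {Y : Type v} {K : Type t} {C : Type*}
    [NormedAddCommGroup X] [NormedSpace 𝕜 X] [NormedAddCommGroup Y] [NormedSpace 𝕜 Y]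
    [FiniteDimensional 𝕜 Y] [Finite K] [Finite C] (η₀ : X →ₗᵢ[𝕜] Y) (η : K → X →ₗᵢ[𝕜] Y) {ε : ℝ}
    (hε : 0 < ε) :
    ∃ (Z : Type (max t v w)) (_ : NormedAddCommGroup Z) (_ : NormedSpace 𝕜 Z)
      (_ : FiniteDimensional 𝕜 Z), ∀ c : (X →ₗᵢ[𝕜] Z) → C, ∃ (γ : Y →ₗᵢ[𝕜] Z) (j : C),
        ∀ k, ∃ ξ : X →ₗᵢ[𝕜] Z, c ξ = j ∧ ∀ x, ‖γ (η k x) - ξ x‖ ≤ ε * ‖x‖ := by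
  classical
  obtain ⟨G, W, _, _, _, _, _, σ, γ, hγ⟩ :=
    exists_finite_almost_homogeneous_family η₀ η (half_pos hε)
  obtain ⟨n, n_pos, hn⟩ := exists_monochromatic_hammingDist_le (C := C) σ (δ := ε / 4)
    (by positivity)
  have : NeZero n := ⟨n_pos.ne'⟩
  let D (g : Fin n → G) : Y →ₗᵢ[𝕜] PiLp 1 (fun _ : Fin n ↦ W) := averageIsometry fun i ↦ γ (g i)
  refine ⟨PiLp 1 (fun _ : Fin n ↦ W), inferInstance, inferInstance, inferInstance, fun c ↦ ?_⟩
  obtain ⟨g, j, hg⟩ := hn fun h ↦ c ((D h).comp η₀)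
  refine ⟨D g, j, fun k ↦ ?_⟩
  obtain ⟨h, hc, hdist⟩ := hg k
  refine ⟨(D h).comp η₀, hc, fun x ↦ ?_⟩
  set g' : Fin n → G := fun i ↦ σ k (g i)
  have homogeneous_le : ‖D g (η k x) - D g' (η₀ x)‖ ≤ ε / 2 * ‖x‖ :=
    norm_averageIsometry_sub_le fun i ↦ by rw [norm_sub_rev]; exact hγ k (g i) x
  have div_le : (hammingDist g' h / n : ℝ) ≤ ε / 4 := (div_le_iff₀ (mod_cast n_pos)).2 hdist
  have hamming_le : ‖D g' (η₀ x) - D h (η₀ x)‖ ≤ 2 * (ε / 4) * ‖x‖ :=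
    calc ‖D g' (η₀ x) - D h (η₀ x)‖ ≤ 2 * (hammingDist g' h / n) * ‖x‖ := by
          simpa using norm_averageIsometry_sub_le_hammingDist γ g' h (η₀ x)
      _ ≤ 2 * (ε / 4) * ‖x‖ := by gcongr
  calc ‖D g (η k x) - D h (η₀ x)‖
      ≤ ‖D g (η k x) - D g' (η₀ x)‖ + ‖D g' (η₀ x) - D h (η₀ x)‖ :=
        norm_sub_le_norm_sub_add_norm_sub _ _ _
    _ ≤ ε * ‖x‖ := by linarith

theorem exists_approx_monochromatic {X : Type u} {Y : Type v} {C : Type*}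
    [NormedAddCommGroup X] [NormedSpace 𝕜 X] [NormedAddCommGroup Y] [NormedSpace 𝕜 Y]
    [FiniteDimensional 𝕜 Y] [Finite C] (η₀ : X →ₗᵢ[𝕜] Y) {ε : ℝ} (hε : 0 < ε) :
    ∃ (Z : Type (max u v w)) (_ : NormedAddCommGroup Z) (_ : NormedSpace 𝕜 Z)
      (_ : FiniteDimensional 𝕜 Z), ∀ c : (X →ₗᵢ[𝕜] Z) → C, ∃ (γ : Y →ₗᵢ[𝕜] Z) (j : C),
        ∀ η : X →ₗᵢ[𝕜] Y, ∃ ξ : X →ₗᵢ[𝕜] Z, c ξ = j ∧ ∀ x, ‖γ (η x) - ξ x‖ ≤ ε * ‖x‖ := by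
  have : FiniteDimensional 𝕜 X := .of_injective η₀.toLinearMap η₀.injective
  obtain ⟨N, finite_N, hN⟩ :=
    exists_finite_net_linearIsometry (𝕜 := 𝕜) (X := X) (Y := Y) (half_pos hε)
  have : Finite N := finite_N
  obtain ⟨Z, _, _, _, hZ⟩ :=
    exists_approx_monochromatic_of_finite (C := C) η₀ (Subtype.val : N → _) (half_pos hε)
  refine ⟨Z, ‹_›, ‹_›, ‹_›, fun c ↦ ?_⟩
  obtain ⟨γ, j, hγ⟩ := hZ c
  refine ⟨γ, j, fun η ↦ ?_⟩
  obtain ⟨θ, hθN, hθ⟩ := hN η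
  obtain ⟨ξ, hξ, norm_sub_le⟩ := hγ ⟨θ, hθN⟩
  refine ⟨ξ, hξ, fun x ↦ ?_⟩
  have net_le : ‖γ (η x) - γ (θ x)‖ ≤ ε / 2 * ‖x‖ := by
    rw [← map_sub, LinearIsometry.norm_map]
    exact hθ x
  calc ‖γ (η x) - ξ x‖ ≤ ‖γ (η x) - γ (θ x)‖ + ‖γ (θ x) - ξ x‖ :=
        norm_sub_le_norm_sub_add_norm_sub _ _ _
    _ ≤ ε / 2 * ‖x‖ + ε / 2 * ‖x‖ := add_le_add net_le (norm_sub_le x)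
    _ = ε * ‖x‖ := by ring

theorem discrete_arp_fd_complex_normed_spaces_general (X : Type u) (Y : Type v) (C : Type*)
    [Finite C] [NormedAddCommGroup X] [NormedSpace 𝕜 X] [FiniteDimensional 𝕜 X]
    [NormedAddCommGroup Y] [NormedSpace 𝕜 Y] [FiniteDimensional 𝕜 Y] {ε : ℝ} (hε : 0 < ε) :
    ∃ (Z : Type (max u v w)) (_ : NormedAddCommGroup Z) (_ : NormedSpace 𝕜 Z)
      (_ : FiniteDimensional 𝕜 Z),
      ∀ c : {φ : X →L[𝕜] Z // ∀ x, ‖φ x‖ = ‖x‖} → C,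
        ∃ (γ : Y →L[𝕜] Z) (_ : ∀ y, ‖γ y‖ = ‖y‖) (j : C),
          ∀ η : X →L[𝕜] Y, (∀ x, ‖η x‖ = ‖x‖) →
            ∃ (ξ : X →L[𝕜] Z) (hξ : ∀ x, ‖ξ x‖ = ‖x‖),
              c ⟨ξ, hξ⟩ = j ∧ ‖γ.comp η - ξ‖ ≤ ε := by
  -- Replacing `Y` by `X × Y` makes sure that some isometric embedding of `X` exists.
  let inl : X →ₗᵢ[𝕜] X × Y := ⟨LinearMap.inl 𝕜 X Y, by simp⟩
  let inr : Y →ₗᵢ[𝕜] X × Y := ⟨LinearMap.inr 𝕜 X Y, by simp⟩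
  obtain ⟨Z, _, _, _, hZ⟩ := exists_approx_monochromatic (C := C) inl hε
  refine ⟨Z, ‹_›, ‹_›, ‹_›, fun c ↦ ?_⟩
  obtain ⟨γ, j, hγ⟩ := hZ fun φ ↦ c ⟨φ.toContinuousLinearMap, φ.norm_map⟩
  refine ⟨(γ.comp inr).toContinuousLinearMap, (γ.comp inr).norm_map, j, fun η hη ↦ ?_⟩
  obtain ⟨ξ, hξ, norm_sub_le⟩ := hγ (inr.comp ⟨η.toLinearMap, hη⟩)
  exact ⟨ξ.toContinuousLinearMap, ξ.norm_map, hξ,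
    ContinuousLinearMap.opNorm_le_bound _ hε.le norm_sub_le⟩

end Ramsey

/-- Discrete approximate Ramsey property of the class of finite-dimensional complex normed
spaces. -/
theorem discrete_arp_fd_complex_normed_spaces
    (X Y : Type u) [NormedAddCommGroup X] [NormedSpace ℂ X] [FiniteDimensional ℂ X]
    [NormedAddCommGroup Y] [NormedSpace ℂ Y] [FiniteDimensional ℂ Y]
    (r : ℕ) (ε : ℝ) (hε : 0 < ε) :
    ∃ (Z : Type u) (_ : NormedAddCommGroup Z) (_ : NormedSpace ℂ Z)
      (_ : FiniteDimensional ℂ Z),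
      ∀ c : {φ : X →L[ℂ] Z // ∀ x, ‖φ x‖ = ‖x‖} → Fin r,
        ∃ (γ : Y →L[ℂ] Z) (_ : ∀ y, ‖γ y‖ = ‖y‖) (j : Fin r),
          ∀ η : X →L[ℂ] Y, (∀ x, ‖η x‖ = ‖x‖) →
            ∃ (ξ : X →L[ℂ] Z) (hξ : ∀ x, ‖ξ x‖ = ‖x‖),
              c ⟨ξ, hξ⟩ = j ∧ ‖γ.comp η - ξ‖ ≤ ε :=
  discrete_arp_fd_complex_normed_spaces_general X Y (Fin r) hε
end

section
/- The class of finite-dimensional complex normed spaces satisfies the stable Ramsey property with modulus ϖ(δ) = δ: for all finite-dimensional complex normed spaces X and Y, every δ ≥ 0, and every ε > 0, there exists a finite-dimensional complex normed space Z such that for every 1-Lipschitz map c from the set of linear δ-embeddings of X into Z (with the operator-norm metric) to [0,1], there exists a linear isometric embedding γ : Y → Z such that |c(γ ∘ η₀) − c(γ ∘ η₁)| ≤ ε + δ for all linear δ-embeddings η₀, η₁ of X into Y. -/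
universe u

/-- A linear `δ`-embedding between normed spaces: a contraction whose inverse (on its range) has
norm at most `1 + δ`. `0`-embeddings are exactly the linear isometric embeddings. -/
def IsDeltaEmbedding {X Y : Type*} [NormedAddCommGroup X] [NormedSpace ℂ X]
    [NormedAddCommGroup Y] [NormedSpace ℂ Y] (δ : ℝ) (φ : X →L[ℂ] Y) : Prop :=
  ∀ x : X, ‖φ x‖ ≤ ‖x‖ ∧ ‖x‖ ≤ (1 + δ) * ‖φ x‖

/-!
Let `e` range over a finite net of the `δ`-embeddings `X → Y` and put `τ = δ / (2 (1 + δ))`.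
A functional in the unit ball of `Y*` restricts along `e`, up to an error `τ`, to one in the ball of
radius `1 - τ` of `X*`, and conversely every functional in that ball is, up to an error `τ`, such a
restriction. Hence a functional on `Y` propagates along the infinite `|E|`-regular tree, which
consists of the reduced words of the free product of copies of `ℤ/2` indexed by the net. Damping it
linearly in the word length makes the tree finite at an arbitrarily small cost, and then the
generators act by permutations on a finite set; replacing this set by its symmetric group `G` makes
all base points equivalent. Evaluating all functionals so obtained embeds copies `γ g` of `Y` and
contracted copies `ξ g` of `X`, for `g ∈ G`, in a space `W` in such a way that `γ g ∘ e` is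
`τ`-close to `ξ (σ e g)`, where each `σ e` is a permutation of `G`.

In the `ℓ¹`-sum of `N` copies of `W`, the average of `N` maps moves by `O(1/N)` when one of them
changes. So a `1`-Lipschitz function of the average of `ξ (g 1), …, ξ (g N)` has small variance on
`G ^ N`, and since the `σ e` preserve the uniform measure, one can choose `g` so that its values at
all the translates `σ e g` are close to its mean. The average of `γ (g 1), …, γ (g N)` is the
required isometry: the colours of its composites with the `e` are all close, up to `τ`, to that
mean.
-/

open Function Metric
open scoped BigOperators NNReal ENNReal

universe v w

/-! ### Concentration for functions with bounded differences -/

section Concentration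

theorem abs_expect_sub_expect_le {α : Type*} [Fintype α] [Nonempty α] {u v : α → ℝ} {d : ℝ}
    (h : ∀ a, |u a - v a| ≤ d) : |𝔼 a, u a - 𝔼 a, v a| ≤ d := by
  rw [← Finset.expect_sub_distrib]
  exact (Finset.abs_expect_le _ _).trans (Finset.expect_le Finset.univ_nonempty fun a _ => h a)

theorem expect_sub_sq_le {α : Type*} [Fintype α] [Nonempty α] {u : α → ℝ} {d : ℝ}
    (h : ∀ a b, |u a - u b| ≤ d) (c : ℝ) :
    𝔼 a, (u a - c) ^ 2 ≤ d ^ 2 + (𝔼 a, u a - c) ^ 2 := by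
  set m := 𝔼 a, u a with hm
  have hdev (a : α) : (u a - m) ^ 2 ≤ d ^ 2 := by
    refine sq_le_sq.2 (le_trans ?_ (le_abs_self d))
    simpa [hm] using abs_expect_sub_expect_le (u := fun _ => u a) (h a)
  have hcentered : 𝔼 a, (u a - m) = 0 := by simp [Finset.expect_sub_distrib, hm]
  calc 𝔼 a, (u a - c) ^ 2
      = 𝔼 a, ((u a - m) ^ 2 + 2 * (m - c) * (u a - m) + (m - c) ^ 2) := by
        congr! 2 with a; ring
    _ = 𝔼 a, (u a - m) ^ 2 + (m - c) ^ 2 := by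
        simp [Finset.expect_add_distrib, ← Finset.mul_expect, hcentered]
    _ ≤ d ^ 2 + (m - c) ^ 2 := by
        gcongr
        exact Finset.expect_le Finset.univ_nonempty fun a _ => hdev a

theorem expect_fin_succ_pi {n : ℕ} {G : Fin (n + 1) → Type*} [∀ i, Fintype (G i)]
    (F : (∀ i, G i) → ℝ) : 𝔼 g, F g = 𝔼 h : ∀ i : Fin n, G i.succ, 𝔼 a, F (Fin.cons a h) := by
  rw [Finset.expect_comm, ← Finset.expect_product', Finset.univ_product_univ]
  exact (Fintype.expect_equiv (Fin.consEquiv G) _ _ fun _ => rfl).symm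

theorem variance_le_of_bounded_differences {n : ℕ} {G : Fin n → Type*} [∀ i, Fintype (G i)]
    [∀ i, Nonempty (G i)] {F : (∀ i, G i) → ℝ} {d : Fin n → ℝ}
    (hF : ∀ g i b, |F g - F (update g i b)| ≤ d i) :
    𝔼 g, (F g - 𝔼 h, F h) ^ 2 ≤ ∑ i, d i ^ 2 := by
  induction n with
  | zero => simp [Finset.expect_eq_sum_div_card]
  | succ n ih =>
    let m : (∀ i : Fin n, G i.succ) → ℝ := fun h => 𝔼 a, F (Fin.cons a h)
    have hmean : 𝔼 g, F g = 𝔼 h, m h := expect_fin_succ_pi F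
    have hfirst (h : ∀ i : Fin n, G i.succ) (a b : G 0) :
        |F (Fin.cons a h) - F (Fin.cons b h)| ≤ d 0 := by
      simpa only [Fin.update_cons_zero] using hF (Fin.cons a h) 0 b
    have hrest (h : ∀ i : Fin n, G i.succ) (i : Fin n) (b : G i.succ) :
        |m h - m (update h i b)| ≤ d i.succ := by
      refine abs_expect_sub_expect_le fun a => ?_
      simpa only [Fin.cons_update] using hF (Fin.cons a h) i.succ b
    calc 𝔼 g, (F g - 𝔼 h, F h) ^ 2
        = 𝔼 h, 𝔼 a, (F (Fin.cons a h) - 𝔼 h, m h) ^ 2 := by rw [expect_fin_succ_pi, hmean]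
      _ ≤ 𝔼 h, (d 0 ^ 2 + (m h - 𝔼 h, m h) ^ 2) :=
          Finset.expect_le_expect fun h _ => expect_sub_sq_le (hfirst h) _
      _ = d 0 ^ 2 + 𝔼 h, (m h - 𝔼 h, m h) ^ 2 := by simp [Finset.expect_add_distrib]
      _ ≤ d 0 ^ 2 + ∑ i : Fin n, d i.succ ^ 2 := by gcongr; exact ih hrest
      _ = ∑ i, d i ^ 2 := (Fin.sum_univ_succ fun i => d i ^ 2).symm

theorem exists_forall_abs_comp_perm_sub_le {Ω S : Type*} [Fintype Ω] [Nonempty Ω] [Fintype S]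
    (σ : S → Equiv.Perm Ω) (F : Ω → ℝ) (M : ℝ) {η : ℝ} (hη : 0 ≤ η)
    (h : Fintype.card S * 𝔼 x, (F x - M) ^ 2 ≤ η ^ 2) :
    ∃ x, ∀ s, |F (σ s x) - M| ≤ η := by
  have hinv (s : S) : 𝔼 x, (F (σ s x) - M) ^ 2 = 𝔼 x, (F x - M) ^ 2 :=
    Fintype.expect_equiv (σ s) _ _ fun _ => rfl
  have hsum : 𝔼 x, ∑ s, (F (σ s x) - M) ^ 2 ≤ η ^ 2 := by
    rw [Finset.expect_sum_comm]
    simpa [hinv] using h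
  obtain ⟨x, -, hx⟩ := Finset.exists_le_of_expect_le Finset.univ_nonempty hsum
  refine ⟨x, fun s => abs_le_of_sq_le_sq ?_ hη⟩
  exact (Finset.single_le_sum (f := fun s => (F (σ s x) - M) ^ 2) (fun _ _ => sq_nonneg _)
    (Finset.mem_univ s)).trans hx

end Concentration

/-! ### Truncated trees -/

section ReducedWords

variable {E : Type*}

/-- The reduced words of length at most `R` in the free product of copies of `ℤ/2` indexed by `E`,
that is, the ball of radius `R` in the `|E|`-regular tree. The head of the list is the last
letter to have been added. -/
def ReducedWord (E : Type*) (R : ℕ) : Type _ :=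
  {l : List E // l.IsChain (· ≠ ·) ∧ l.length ≤ R}

instance [Finite E] (R : ℕ) : Finite (ReducedWord E R) :=
  (List.finite_length_le E R).subset fun _ hl => hl.2

theorem exists_list_labelling {A B : Type*} {r : E → A → B → Prop} (hleft : ∀ e a, ∃ b, r e a b)
    (hright : ∀ e b, ∃ a, r e a b) (a₀ : A) (b₀ : B) :
    ∃ (u : List E → A) (w : List E → B), u [] = a₀ ∧
      ∀ e l, r e (u l) (w (e :: l)) ∧ r e (u (e :: l)) (w l) := by
  choose res hres using hleft
  choose ext hext using hright
  let label : List E → A × B := List.foldr (fun e p => (ext e p.2, res e p.1)) (a₀, b₀)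
  exact ⟨fun l => (label l).1, fun l => (label l).2, rfl, fun e l => ⟨hres _ _, hext _ _⟩⟩

variable [DecidableEq E]

/-- Left multiplication by the generator `e`, where the words that it would make longer than `R`
are left fixed. -/
def toggleHead (R : ℕ) (e : E) (l : List E) : List E :=
  if l.head? = some e then l.tail else if l.length < R then e :: l else l

theorem toggleHead_cases (R : ℕ) (e : E) (l : List E) :
    l = e :: toggleHead R e l ∨ toggleHead R e l = e :: l ∨
      toggleHead R e l = l ∧ R ≤ l.length := by
  unfold toggleHead
  split_ifs with hhead hlen
  · exact .inl (List.cons_head?_tail hhead).symm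
  · exact .inr (.inl rfl)
  · exact .inr (.inr ⟨rfl, not_lt.1 hlen⟩)

theorem toggleHead_mem {R : ℕ} {l : List E} (hl : l.IsChain (· ≠ ·) ∧ l.length ≤ R) (e : E) :
    (toggleHead R e l).IsChain (· ≠ ·) ∧ (toggleHead R e l).length ≤ R := by
  unfold toggleHead
  split_ifs with hhead hlen
  · exact ⟨hl.1.tail, l.length_tail.trans_le ((Nat.sub_le _ _).trans hl.2)⟩
  · refine ⟨List.isChain_cons.2 ⟨?_, hl.1⟩, hlen⟩
    rintro _ hy rfl
    exact hhead hy
  · exact hl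

theorem toggleHead_toggleHead {R : ℕ} {l : List E} (hl : l.IsChain (· ≠ ·) ∧ l.length ≤ R)
    (e : E) : toggleHead R e (toggleHead R e l) = l := by
  by_cases hhead : l.head? = some e
  · obtain ⟨t, rfl⟩ := List.head?_eq_some_iff.1 hhead
    have ht : t.head? ≠ some e := fun h => (List.isChain_cons.1 hl.1).1 e h rfl
    simp [toggleHead, ht, Nat.lt_of_succ_le hl.2]
  · by_cases hlen : l.length < R <;> simp [toggleHead, hhead, hlen]

/-- The involution of the truncated tree given by the generator `e`. -/
def ReducedWord.toggle (R : ℕ) (e : E) : Equiv.Perm (ReducedWord E R) :=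
  Function.Involutive.toPerm (fun l => ⟨toggleHead R e l.1, toggleHead_mem l.2 e⟩)
    fun l => Subtype.ext (toggleHead_toggleHead l.2 e)

end ReducedWords

variable {𝕜 : Type w} [RCLike 𝕜]

/-! ### Embeddings and functionals -/

section Functionals

theorem exists_dual_comp_eq {X Y : Type*} [AddCommGroup X] [Module 𝕜 X]
    [SeminormedAddCommGroup Y] [NormedSpace 𝕜 Y] {φ : X →ₗ[𝕜] Y} {f : X →ₗ[𝕜] 𝕜}
    (h : ∀ x, ‖f x‖ ≤ ‖φ x‖) : ∃ g : StrongDual 𝕜 Y, ‖g‖ ≤ 1 ∧ ∀ x, g (φ x) = f x := by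
  obtain ⟨g₀, rfl⟩ : f ∈ LinearMap.range φ.dualMap := by
    rw [LinearMap.range_dualMap_eq_dualAnnihilator_ker, Submodule.mem_dualAnnihilator]
    intro x hx
    simpa [LinearMap.mem_ker.1 hx] using h x
  let gRange : StrongDual 𝕜 (LinearMap.range φ) :=
    (g₀.domRestrict _).mkContinuous 1 (by rintro ⟨_, x, rfl⟩; simpa using h x)
  obtain ⟨g, hg, hnorm⟩ := exists_extension_norm_eq _ gRange
  exact ⟨g, hnorm.trans_le (LinearMap.mkContinuous_norm_le _ zero_le_one _),
    fun x => hg ⟨φ x, x, rfl⟩⟩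

variable {X Y : Type*} [SeminormedAddCommGroup X] [NormedSpace 𝕜 X]
  [SeminormedAddCommGroup Y] [NormedSpace 𝕜 Y]

/-- The linear `δ`-embeddings of `X` into `Y` over an arbitrary `RCLike` field; for `𝕜 = ℂ` its
members are by definition the maps satisfying `IsDeltaEmbedding δ`. -/
def deltaEmbeddings (𝕜 : Type*) [RCLike 𝕜] (X Y : Type*) [SeminormedAddCommGroup X]
    [NormedSpace 𝕜 X] [SeminormedAddCommGroup Y] [NormedSpace 𝕜 Y] (δ : ℝ) : Set (X →L[𝕜] Y) :=
  {φ | ∀ x, ‖φ x‖ ≤ ‖x‖ ∧ ‖x‖ ≤ (1 + δ) * ‖φ x‖}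

theorem opNorm_le_one_of_mem_deltaEmbeddings {δ : ℝ} {φ : X →L[𝕜] Y}
    (hφ : φ ∈ deltaEmbeddings 𝕜 X Y δ) : ‖φ‖ ≤ 1 :=
  φ.opNorm_le_bound zero_le_one fun x => by simpa using (hφ x).1

theorem totallyBounded_deltaEmbeddings (X Y : Type*) [NormedAddCommGroup X] [NormedSpace 𝕜 X]
    [FiniteDimensional 𝕜 X] [NormedAddCommGroup Y] [NormedSpace 𝕜 Y] [FiniteDimensional 𝕜 Y]
    (δ : ℝ) : TotallyBounded (deltaEmbeddings 𝕜 X Y δ) :=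
  have : ProperSpace (X →L[𝕜] Y) := FiniteDimensional.proper 𝕜 _
  (isCompact_closedBall (0 : X →L[𝕜] Y) 1).totallyBounded.subset fun _ hφ =>
    mem_closedBall_zero_iff.2 (opNorm_le_one_of_mem_deltaEmbeddings hφ)

theorem exists_dual_near_comp {φ : X →L[𝕜] Y} (hφ : ‖φ‖ ≤ 1) {τ : ℝ}
    (hτ₀ : 0 ≤ τ) (hτ₁ : τ ≤ 1) {g : StrongDual 𝕜 Y} (hg : ‖g‖ ≤ 1) :
    ∃ f : StrongDual 𝕜 X, ‖f‖ ≤ 1 - τ ∧ ‖g.comp φ - f‖ ≤ τ := by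
  have hcomp : ‖g.comp φ‖ ≤ 1 :=
    (g.opNorm_comp_le φ).trans (mul_le_one₀ hg (norm_nonneg _) hφ)
  refine ⟨((1 - τ : ℝ) : 𝕜) • g.comp φ, ?_, ?_⟩
  · rw [norm_smul, RCLike.norm_ofReal, abs_of_nonneg (sub_nonneg.2 hτ₁)]
    exact mul_le_of_le_one_right (sub_nonneg.2 hτ₁) hcomp
  · have hdiff : g.comp φ - ((1 - τ : ℝ) : 𝕜) • g.comp φ = (τ : 𝕜) • g.comp φ := by
      push_cast
      module
    rw [hdiff, norm_smul, RCLike.norm_ofReal, abs_of_nonneg hτ₀]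
    exact mul_le_of_le_one_right hτ₀ hcomp

theorem exists_dual_comp_near {δ : ℝ} (hδ : 0 ≤ δ) {φ : X →L[𝕜] Y}
    (hφ : φ ∈ deltaEmbeddings 𝕜 X Y δ) {f : StrongDual 𝕜 X} (hf : ‖f‖ ≤ 1 - δ / (2 * (1 + δ))) :
    ∃ g : StrongDual 𝕜 Y, ‖g‖ ≤ 1 ∧ ‖g.comp φ - f‖ ≤ δ / (2 * (1 + δ)) := by
  -- `s` is `1 / (1 + δ)` divided by `1 - δ / (2 * (1 + δ))`: it brings `f` down to the norm
  -- `1 / (1 + δ)` at which extension along `φ` is possible exactly.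
  set s : ℝ := 2 / (2 + δ) with hs
  have hs₀ : 0 ≤ s := by positivity
  have hdom (x : X) : ‖((s : 𝕜) • f) x‖ ≤ ‖φ x‖ := by
    calc ‖((s : 𝕜) • f) x‖ = s * ‖f x‖ := by simp [abs_of_nonneg hs₀]
      _ ≤ s * ((1 - δ / (2 * (1 + δ))) * ((1 + δ) * ‖φ x‖)) := by
        gcongr
        exact (f.le_of_opNorm_le hf x).trans
          (mul_le_mul_of_nonneg_left (hφ x).2 ((norm_nonneg f).trans hf))
      _ = ‖φ x‖ := by rw [hs]; field_simp; ring
  obtain ⟨g, hg, hgf⟩ := exists_dual_comp_eq (φ := (φ : X →ₗ[𝕜] Y))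
    (f := (((s : 𝕜) • f : StrongDual 𝕜 X) : X →ₗ[𝕜] 𝕜)) hdom
  have hdiff : g.comp φ - f = ((s - 1 : ℝ) : 𝕜) • f := by
    have hcomp : g.comp φ = (s : 𝕜) • f := ContinuousLinearMap.ext hgf
    rw [hcomp]
    push_cast
    module
  have habs : |s - 1| = δ / (2 + δ) := by
    have hsub : s - 1 = -(δ / (2 + δ)) := by rw [hs]; field_simp; ring
    rw [hsub, abs_neg, abs_of_nonneg (by positivity)]
  refine ⟨g, hg, ?_⟩
  calc ‖g.comp φ - f‖ = δ / (2 + δ) * ‖f‖ := by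
        rw [hdiff, norm_smul, RCLike.norm_ofReal, habs]
    _ ≤ δ / (2 + δ) * (1 - δ / (2 * (1 + δ))) := by gcongr
    _ = δ / (2 * (1 + δ)) := by field_simp; ring

/-- The pairs of families of functionals in the unit balls of `Y*` and `X*`, indexed by `G`, such
that the functional on `Y` at `g` restricts along `emb e` to the functional on `X` at `σ e g`, up to
an error `τ`. -/
def compatibleFunctionals {E G : Type*} (emb : E → X →L[𝕜] Y) (σ : E → Equiv.Perm G) (τ : ℝ) :
    Set ((G → StrongDual 𝕜 Y) × (G → StrongDual 𝕜 X)) :=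
  {p | (∀ g, ‖p.1 g‖ ≤ 1) ∧ (∀ g, ‖p.2 g‖ ≤ 1) ∧
    ∀ e g, ‖(p.1 g).comp (emb e) - p.2 (σ e g)‖ ≤ τ}

theorem comp_mem_compatibleFunctionals {E G V : Type*} {emb : E → X →L[𝕜] Y}
    {s : E → Equiv.Perm V} {σ : E → Equiv.Perm G} {τ : ℝ}
    {p : (V → StrongDual 𝕜 Y) × (V → StrongDual 𝕜 X)} (hp : p ∈ compatibleFunctionals emb s τ)
    {f : G → V} (hf : ∀ e g, f (σ e g) = s e (f g)) :
    (p.1 ∘ f, p.2 ∘ f) ∈ compatibleFunctionals emb σ τ :=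
  ⟨fun g => hp.1 (f g), fun g => hp.2.1 (f g), fun e g => by
    simpa only [comp_apply, hf] using hp.2.2 e (f g)⟩

theorem norm_smul_comp_sub_smul_le {φ : X →L[𝕜] Y} {g : StrongDual 𝕜 Y} {f : StrongDual 𝕜 X}
    {τ κ : ℝ} {b c : 𝕜} (hf : ‖f‖ ≤ 1) (hgf : ‖g.comp φ - f‖ ≤ τ) (hb : ‖b‖ ≤ 1)
    (hbc : ‖b - c‖ ≤ κ) : ‖(b • g).comp φ - c • f‖ ≤ τ + κ :=
  calc ‖(b • g).comp φ - c • f‖ = ‖b • (g.comp φ - f) + (b - c) • f‖ := by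
        rw [ContinuousLinearMap.smul_comp]
        congr 1
        module
    _ ≤ ‖b‖ * ‖g.comp φ - f‖ + ‖b - c‖ * ‖f‖ := by
        rw [← norm_smul, ← norm_smul]
        exact norm_add_le _ _
    _ ≤ τ + κ := add_le_add ((mul_le_of_le_one_left (norm_nonneg _) hb).trans hgf)
        ((mul_le_of_le_one_right (norm_nonneg _) hf).trans hbc)

theorem exists_functionals_on_tree {E : Type*} {emb : E → X →L[𝕜] Y} {δ : ℝ} (hδ : 0 ≤ δ)
    (hemb : ∀ e, emb e ∈ deltaEmbeddings 𝕜 X Y δ) {y : StrongDual 𝕜 Y} (hy : ‖y‖ ≤ 1) :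
    ∃ (u : List E → StrongDual 𝕜 Y) (w : List E → StrongDual 𝕜 X),
      u [] = y ∧ (∀ l, ‖u l‖ ≤ 1) ∧ (∀ l, ‖w l‖ ≤ 1) ∧
      ∀ e l, ‖(u l).comp (emb e) - w (e :: l)‖ ≤ δ / (2 * (1 + δ)) ∧
        ‖(u (e :: l)).comp (emb e) - w l‖ ≤ δ / (2 * (1 + δ)) := by
  have hτ₀ : 0 ≤ δ / (2 * (1 + δ)) := by positivity
  have hτ₁ : δ / (2 * (1 + δ)) ≤ 1 := (div_le_one (by positivity)).2 (by linarith)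
  obtain ⟨u, w, hu, huw⟩ := exists_list_labelling
    (A := {g : StrongDual 𝕜 Y // ‖g‖ ≤ 1})
    (B := {f : StrongDual 𝕜 X // ‖f‖ ≤ 1 - δ / (2 * (1 + δ))})
    (r := fun e g f => ‖g.1.comp (emb e) - f.1‖ ≤ δ / (2 * (1 + δ)))
    (fun e g =>
      let ⟨f, hf, hgf⟩ := exists_dual_near_comp
        (opNorm_le_one_of_mem_deltaEmbeddings (hemb e)) hτ₀ hτ₁ g.2
      ⟨⟨f, hf⟩, hgf⟩)
    (fun e f =>
      let ⟨g, hg, hgf⟩ := exists_dual_comp_near hδ (hemb e) f.2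
      ⟨⟨g, hg⟩, hgf⟩)
    ⟨y, hy⟩ ⟨0, by simpa using hτ₁⟩
  exact ⟨fun l => (u l).1, fun l => (w l).1, congrArg Subtype.val hu, fun l => (u l).2,
    fun l => (w l).2.trans (sub_le_self 1 hτ₀), huw⟩

theorem exists_linear_damping (𝕜 : Type*) [RCLike 𝕜] {R : ℕ} (hR : 0 < R) :
    ∃ t : ℕ → 𝕜, t 0 = 1 ∧ t R = 0 ∧ (∀ n ≤ R, ‖t n‖ ≤ 1) ∧ ∀ n, ‖t (n + 1) - t n‖ = 1 / R := by
  have hR' : (0 : ℝ) < R := Nat.cast_pos.2 hR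
  refine ⟨fun n => ((1 - n / R : ℝ) : 𝕜), by simp, by simp [hR'.ne'], fun n hn => ?_, fun n => ?_⟩
  · have hquot : (n : ℝ) / R ≤ 1 := (div_le_one hR').2 (Nat.cast_le.2 hn)
    rw [RCLike.norm_ofReal, abs_of_nonneg (sub_nonneg.2 hquot)]
    exact sub_le_self 1 (by positivity)
  · have hsub : (1 - (n + 1 : ℕ) / R : ℝ) - (1 - n / R) = -(1 / R) := by
      push_cast
      ring
    rw [← RCLike.ofReal_sub, hsub, RCLike.norm_ofReal, abs_neg, abs_of_nonneg (by positivity)]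

theorem exists_functionals_toggleHead {E : Type*} [DecidableEq E]
    {emb : E → X →L[𝕜] Y} {δ : ℝ} (hδ : 0 ≤ δ) (hemb : ∀ e, emb e ∈ deltaEmbeddings 𝕜 X Y δ)
    {R : ℕ} (hR : 0 < R) {y : StrongDual 𝕜 Y} (hy : ‖y‖ ≤ 1) :
    ∃ (u : List E → StrongDual 𝕜 Y) (w : List E → StrongDual 𝕜 X), u [] = y ∧
      ∀ l, l.length ≤ R → ‖u l‖ ≤ 1 ∧ ‖w l‖ ≤ 1 ∧
        ∀ e, ‖(u l).comp (emb e) - w (toggleHead R e l)‖ ≤ δ / (2 * (1 + δ)) + 1 / R := by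
  obtain ⟨u, w, hu, hu₁, hw₁, huw⟩ := exists_functionals_on_tree hδ hemb hy
  obtain ⟨t, ht₀, htR, ht₁, hstep⟩ := exists_linear_damping 𝕜 hR
  refine ⟨fun l => t l.length • u l, fun l => t l.length • w l, by simp [ht₀, hu],
    fun l hlen => ⟨?_, ?_, fun e => ?_⟩⟩
  · exact (norm_smul _ _).trans_le (mul_le_one₀ (ht₁ _ hlen) (norm_nonneg _) (hu₁ l))
  · exact (norm_smul _ _).trans_le (mul_le_one₀ (ht₁ _ hlen) (norm_nonneg _) (hw₁ l))
  · obtain hcut | hadd | ⟨hstay, hlong⟩ := toggleHead_cases R e l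
    · generalize toggleHead R e l = k at hcut ⊢
      subst hcut
      exact norm_smul_comp_sub_smul_le (hw₁ k) (huw e k).2 (ht₁ _ hlen) (hstep k.length).le
    · rw [hadd]
      exact norm_smul_comp_sub_smul_le (hw₁ _) (huw e l).1 (ht₁ _ hlen)
        ((norm_sub_rev _ _).trans_le (hstep l.length).le)
    · beta_reduce
      rw [hstay, hlen.antisymm hlong, htR, zero_smul 𝕜 (u l), zero_smul 𝕜 (w l),
        ContinuousLinearMap.zero_comp, sub_zero, norm_zero]
      positivity

theorem exists_compatibleFunctionals_reducedWord {E : Type*} [DecidableEq E]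
    {emb : E → X →L[𝕜] Y} {δ : ℝ} (hδ : 0 ≤ δ) (hemb : ∀ e, emb e ∈ deltaEmbeddings 𝕜 X Y δ)
    {R : ℕ} (hR : 0 < R) {y : StrongDual 𝕜 Y} (hy : ‖y‖ ≤ 1) :
    ∃ p ∈ compatibleFunctionals emb (ReducedWord.toggle R) (δ / (2 * (1 + δ)) + 1 / R),
      p.1 ⟨[], by simp⟩ = y := by
  obtain ⟨u, w, hu, huw⟩ := exists_functionals_toggleHead hδ hemb hR hy
  exact ⟨(fun l => u l.1, fun l => w l.1), ⟨fun l => (huw l.1 l.2.2).1,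
    fun l => (huw l.1 l.2.2).2.1, fun e l => (huw l.1 l.2.2).2.2 e⟩, hu⟩

theorem exists_perm_compatibleFunctionals {E : Type v} [Finite E] {emb : E → X →L[𝕜] Y} {δ : ℝ}
    (hδ : 0 ≤ δ) (hemb : ∀ e, emb e ∈ deltaEmbeddings 𝕜 X Y δ) {ε : ℝ} (hε : 0 < ε) :
    ∃ (G : Type v) (_ : Finite G) (_ : Nonempty G) (σ : E → Equiv.Perm G),
      ∀ (g : G) (y : StrongDual 𝕜 Y), ‖y‖ ≤ 1 →
        ∃ p ∈ compatibleFunctionals emb σ (δ / (2 * (1 + δ)) + ε), p.1 g = y := by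
  classical
  obtain ⟨n, hn⟩ := exists_nat_one_div_lt hε
  let v₀ : ReducedWord E (n + 1) := ⟨[], by simp⟩
  refine ⟨Equiv.Perm (ReducedWord E (n + 1)), inferInstance, inferInstance,
    fun e => Equiv.mulLeft (ReducedWord.toggle (n + 1) e), fun g y hy => ?_⟩
  obtain ⟨p, ⟨hpY, hpX, hp⟩, hpy⟩ :=
    exists_compatibleFunctionals_reducedWord hδ hemb n.succ_pos hy
  have hpε : p ∈ compatibleFunctionals emb (ReducedWord.toggle (n + 1))
      (δ / (2 * (1 + δ)) + ε) := by
    refine ⟨hpY, hpX, fun e l => (hp e l).trans ?_⟩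
    push_cast
    gcongr
  refine ⟨_, comp_mem_compatibleFunctionals hpε (f := fun k => (k * g⁻¹) v₀) fun _ _ => rfl, ?_⟩
  simpa using hpy

end Functionals

/-! ### Amalgamation -/

section Amalgamation

theorem memℓp_infty_of_opNorm_le_one {I V : Type*} {F : I → Type*} [SeminormedAddCommGroup V]
    [NormedSpace 𝕜 V] [∀ i, NormedAddCommGroup (F i)] [∀ i, NormedSpace 𝕜 (F i)]
    {ψ : ∀ i, V →L[𝕜] F i} (hψ : ∀ i, ‖ψ i‖ ≤ 1) (v : V) : Memℓp (fun i => ψ i v) ∞ :=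
  memℓp_infty ⟨1 * ‖v‖, by rintro _ ⟨i, rfl⟩; exact (ψ i).le_of_opNorm_le (hψ i) v⟩

/-- The contraction into an `ℓ∞`-sum with the contractions `ψ i` as coordinates. -/
noncomputable def lpInftyPi {I V : Type*} {F : I → Type*} [SeminormedAddCommGroup V]
    [NormedSpace 𝕜 V] [∀ i, NormedAddCommGroup (F i)] [∀ i, NormedSpace 𝕜 (F i)]
    (ψ : ∀ i, V →L[𝕜] F i) (hψ : ∀ i, ‖ψ i‖ ≤ 1) : V →L[𝕜] lp F ∞ :=
  LinearMap.mkContinuous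
    { toFun v := ⟨fun i => ψ i v, memℓp_infty_of_opNorm_le_one hψ v⟩
      map_add' v v' := by ext i; exact map_add (ψ i) v v'
      map_smul' c v := by ext i; exact map_smul (ψ i) c v }
    1 fun v => lp.norm_le_of_forall_le (mul_nonneg zero_le_one (norm_nonneg v)) fun i =>
      (ψ i).le_of_opNorm_le (hψ i) v

theorem lpInftyPi_apply {I V : Type*} {F : I → Type*} [SeminormedAddCommGroup V]
    [NormedSpace 𝕜 V] [∀ i, NormedAddCommGroup (F i)] [∀ i, NormedSpace 𝕜 (F i)]
    (ψ : ∀ i, V →L[𝕜] F i) (hψ : ∀ i, ‖ψ i‖ ≤ 1) (v : V) (i : I) :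
    lpInftyPi ψ hψ v i = ψ i v := rfl

theorem norm_lpInftyPi_le_one {I V : Type*} {F : I → Type*} [SeminormedAddCommGroup V]
    [NormedSpace 𝕜 V] [∀ i, NormedAddCommGroup (F i)] [∀ i, NormedSpace 𝕜 (F i)]
    (ψ : ∀ i, V →L[𝕜] F i) (hψ : ∀ i, ‖ψ i‖ ≤ 1) : ‖lpInftyPi ψ hψ‖ ≤ 1 :=
  LinearMap.mkContinuous_norm_le _ zero_le_one _

theorem norm_lpInftyPi_of_forall_exists {I V : Type*} [SeminormedAddCommGroup V] [NormedSpace 𝕜 V]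
    {ψ : I → StrongDual 𝕜 V} (hψ : ∀ i, ‖ψ i‖ ≤ 1)
    (hnorming : ∀ f : StrongDual 𝕜 V, ‖f‖ ≤ 1 → ∃ i, ψ i = f) (v : V) :
    ‖lpInftyPi ψ hψ v‖ = ‖v‖ := by
  refine le_antisymm ?_ ?_
  · simpa using (lpInftyPi ψ hψ).le_of_opNorm_le (norm_lpInftyPi_le_one ψ hψ) v
  · obtain ⟨f, hf, hfv⟩ := exists_dual_vector'' 𝕜 v
    obtain ⟨i, rfl⟩ := hnorming f hf
    simpa [lpInftyPi_apply, hfv] using lp.norm_apply_le_norm ENNReal.top_ne_zero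
      (lpInftyPi ψ hψ v) i

theorem exists_amalgam {X : Type u} {Y : Type v} [NormedAddCommGroup X] [NormedSpace 𝕜 X]
    [FiniteDimensional 𝕜 X] [NormedAddCommGroup Y] [NormedSpace 𝕜 Y] [FiniteDimensional 𝕜 Y]
    {E : Type*} {G : Type (max u v)} [Finite G] {emb : E → X →L[𝕜] Y} {σ : E → Equiv.Perm G}
    {τ : ℝ} (hσ : ∀ (g : G) (y : StrongDual 𝕜 Y), ‖y‖ ≤ 1 →
      ∃ p ∈ compatibleFunctionals emb σ τ, p.1 g = y) :
    ∃ (W : Type (max u v w)) (_ : NormedAddCommGroup W) (_ : NormedSpace 𝕜 W)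
      (_ : FiniteDimensional 𝕜 W) (γ : G → Y →ₗᵢ[𝕜] W) (ξ : G → X →L[𝕜] W),
      (∀ g, ‖ξ g‖ ≤ 1) ∧
      ∀ e g, ‖(γ g).toContinuousLinearMap.comp (emb e) - ξ (σ e g)‖ ≤ τ := by
  let I := compatibleFunctionals emb σ τ
  let γ (g : G) : Y →L[𝕜] lp (fun _ : I => 𝕜) ∞ := lpInftyPi (fun p => p.1.1 g) fun p => p.2.1 g
  let ξ (g : G) : X →L[𝕜] lp (fun _ : I => 𝕜) ∞ := lpInftyPi (fun p => p.1.2 g) fun p => p.2.2.1 g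
  let W : Submodule 𝕜 (lp (fun _ : I => 𝕜) ∞) :=
    (⨆ g, LinearMap.range (γ g : Y →ₗ[𝕜] _)) ⊔ ⨆ g, LinearMap.range (ξ g : X →ₗ[𝕜] _)
  have hγW (g : G) (y : Y) : γ g y ∈ W :=
    Submodule.mem_sup_left (Submodule.mem_iSup_of_mem g ⟨y, rfl⟩)
  have hξW (g : G) (x : X) : ξ g x ∈ W :=
    Submodule.mem_sup_right (Submodule.mem_iSup_of_mem g ⟨x, rfl⟩)
  have hγnorm (g : G) (y : Y) : ‖γ g y‖ = ‖y‖ :=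
    norm_lpInftyPi_of_forall_exists _
      (fun f hf => let ⟨p, hp, hpf⟩ := hσ g f hf; ⟨⟨p, hp⟩, hpf⟩) y
  refine ⟨W, inferInstance, inferInstance, inferInstance,
    fun g =>
      { toLinearMap := LinearMap.codRestrict W (γ g : Y →ₗ[𝕜] lp (fun _ : I => 𝕜) ∞) (hγW g)
        norm_map' := hγnorm g },
    fun g => (ξ g).codRestrict W (hξW g), fun g => ?_, fun e g => ?_⟩
  · exact ContinuousLinearMap.opNorm_le_bound _ zero_le_one
      ((ξ g).le_of_opNorm_le (norm_lpInftyPi_le_one _ _))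
  · obtain ⟨p₀, hp₀, -⟩ := hσ g 0 (norm_zero.trans_le zero_le_one)
    have hτ : 0 ≤ τ := (norm_nonneg _).trans (hp₀.2.2 e g)
    refine ContinuousLinearMap.opNorm_le_bound _ hτ fun x => ?_
    refine lp.norm_le_of_forall_le (by positivity) fun p => ?_
    exact ((p.1.1 g).comp (emb e) - p.1.2 (σ e g)).le_of_opNorm_le (p.2.2.2 e g) x

end Amalgamation

/-! ### Averages in `ℓ¹`-sums -/

section Average

variable {ι V W : Type*} [Fintype ι] [SeminormedAddCommGroup V] [NormedSpace 𝕜 V]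
  [SeminormedAddCommGroup W] [NormedSpace 𝕜 W]

/-- The average of the maps `T i`, each of them taking values in its own summand of the `ℓ¹`-sum of
copies of `W`. -/
noncomputable def avgMap (T : ι → V →L[𝕜] W) : V →L[𝕜] PiLp 1 (fun _ : ι => W) :=
  ((PiLp.continuousLinearEquiv 1 𝕜 (fun _ : ι => W)).symm :
      (ι → W) →L[𝕜] PiLp 1 (fun _ : ι => W)).comp
    ((Fintype.card ι : 𝕜)⁻¹ • ContinuousLinearMap.pi T)

theorem norm_avgMap_apply (T : ι → V →L[𝕜] W) (v : V) : ‖avgMap T v‖ = 𝔼 i, ‖T i v‖ := by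
  have hcoord (i : ι) : (avgMap T v).ofLp i = (Fintype.card ι : 𝕜)⁻¹ • T i v := rfl
  simp [PiLp.norm_eq_of_L1, hcoord, norm_smul, ← Finset.mul_sum, Fintype.expect_eq_sum_div_card,
    div_eq_inv_mul]

theorem norm_avgMap_sub_avgMap_le (S T : ι → V →L[𝕜] W) :
    ‖avgMap S - avgMap T‖ ≤ 𝔼 i, ‖S i - T i‖ := by
  have hsub : avgMap S - avgMap T = avgMap fun i => S i - T i := by
    ext v i
    exact (smul_sub _ (S i v) (T i v)).symm
  rw [hsub]
  refine ContinuousLinearMap.opNorm_le_bound _ (Finset.expect_nonneg fun _ _ => norm_nonneg _)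
    fun v => ?_
  rw [norm_avgMap_apply, Finset.expect_mul]
  exact Finset.expect_le_expect fun i _ => (S i - T i).le_opNorm v

/-- The average of isometries with values in the summands of an `ℓ¹`-sum, as an isometry. -/
noncomputable def avgIsometry [Nonempty ι] (T : ι → V →ₗᵢ[𝕜] W) :
    V →ₗᵢ[𝕜] PiLp 1 (fun _ : ι => W) where
  toLinearMap := avgMap fun i => (T i).toContinuousLinearMap
  norm_map' v := (norm_avgMap_apply _ v).trans (by simp)

theorem norm_avgMap_update_sub_le {G : Type*} [DecidableEq ι] {ξ : G → V →L[𝕜] W}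
    (hξ : ∀ g, ‖ξ g‖ ≤ 1) (g : ι → G) (i : ι) (b : G) :
    ‖(avgMap fun j => ξ (g j)) - avgMap fun j => ξ (update g i b j)‖ ≤ 2 / Fintype.card ι := by
  refine (norm_avgMap_sub_avgMap_le _ _).trans ?_
  rw [Fintype.expect_eq_sum_div_card, Fintype.sum_eq_single i fun j hj => by simp [hj]]
  gcongr
  exact (norm_sub_le _ _).trans (by linarith [hξ (g i), hξ (update g i b i)])

theorem exists_nat_card_mul_sum_sq_le (k : ℕ) {ε : ℝ} (hε : 0 < ε) :
    ∃ N : ℕ, 0 < N ∧ k * ∑ _i : Fin N, (2 / N : ℝ) ^ 2 ≤ ε ^ 2 := by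
  obtain ⟨N, hN⟩ := exists_nat_gt (4 * k / ε ^ 2)
  have hN₀ : (0 : ℝ) < N := lt_of_le_of_lt (by positivity) hN
  refine ⟨N, Nat.cast_pos.1 hN₀, ?_⟩
  rw [div_lt_iff₀ (by positivity)] at hN
  calc k * ∑ _i : Fin N, (2 / N : ℝ) ^ 2 = 4 * k / N := by
        simp only [Finset.sum_const, Finset.card_univ, Fintype.card_fin, nsmul_eq_mul]
        field_simp
        norm_num
    _ ≤ ε ^ 2 := (div_le_iff₀ hN₀).2 (by linarith)

end Average

theorem exists_avgIsometry_forall_abs_sub_le {X Y W E G : Type*} [SeminormedAddCommGroup X]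
    [NormedSpace 𝕜 X] [SeminormedAddCommGroup Y] [NormedSpace 𝕜 Y] [SeminormedAddCommGroup W]
    [NormedSpace 𝕜 W] [Finite E] [Finite G] [Nonempty G] {emb : E → X →L[𝕜] Y}
    {σ : E → Equiv.Perm G} {γ : G → Y →ₗᵢ[𝕜] W} {ξ : G → X →L[𝕜] W} {τ : ℝ}
    (hξ : ∀ g, ‖ξ g‖ ≤ 1)
    (hγξ : ∀ e g, ‖(γ g).toContinuousLinearMap.comp (emb e) - ξ (σ e g)‖ ≤ τ)
    {ε : ℝ} (hε : 0 < ε) :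
    ∃ N : ℕ, ∀ C : (X →L[𝕜] PiLp 1 (fun _ : Fin N => W)) → ℝ, LipschitzWith 1 C →
      ∃ (γ' : Y →ₗᵢ[𝕜] PiLp 1 (fun _ : Fin N => W)) (M : ℝ),
        ∀ e, |C (γ'.toContinuousLinearMap.comp (emb e)) - M| ≤ τ + ε := by
  have := Fintype.ofFinite E
  have := Fintype.ofFinite G
  obtain ⟨N, hN, hNε⟩ := exists_nat_card_mul_sum_sq_le (Fintype.card E) hε
  have : NeZero N := ⟨hN.ne'⟩
  refine ⟨N, fun C hC => ?_⟩
  have hlip (φ ψ) : |C φ - C ψ| ≤ ‖φ - ψ‖ := by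
    simpa [Real.dist_eq, dist_eq_norm] using hC.dist_le_mul φ ψ
  let F (g : Fin N → G) : ℝ := C (avgMap fun i => ξ (g i))
  have hvar : 𝔼 g, (F g - 𝔼 h, F h) ^ 2 ≤ ∑ _i : Fin N, (2 / N : ℝ) ^ 2 :=
    variance_le_of_bounded_differences fun g i b =>
      (hlip _ _).trans (by simpa using norm_avgMap_update_sub_le hξ g i b)
  obtain ⟨g, hg⟩ := exists_forall_abs_comp_perm_sub_le
    (fun e => Equiv.piCongrRight fun _ : Fin N => σ e) F (𝔼 h, F h) hε.le
    ((mul_le_mul_of_nonneg_left hvar (Nat.cast_nonneg _)).trans hNε)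
  refine ⟨avgIsometry fun i => γ (g i), 𝔼 h, F h, fun e => ?_⟩
  refine (abs_sub_le _ (F fun i => σ e (g i)) _).trans (add_le_add ((hlip _ _).trans ?_) (hg e))
  exact (norm_avgMap_sub_avgMap_le (fun i => (γ (g i)).toContinuousLinearMap.comp (emb e)) _).trans
    (Finset.expect_le Finset.univ_nonempty fun i _ => hγξ e (g i))

/-! ### The stable Ramsey property -/

theorem exists_isometry_forall_abs_sub_le_of_finite {X : Type u} {Y : Type v}
    [NormedAddCommGroup X] [NormedSpace 𝕜 X] [FiniteDimensional 𝕜 X]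
    [NormedAddCommGroup Y] [NormedSpace 𝕜 Y] [FiniteDimensional 𝕜 Y] {E : Type (max u v)} [Finite E]
    {emb : E → X →L[𝕜] Y} {δ : ℝ} (hδ : 0 ≤ δ) (hemb : ∀ e, emb e ∈ deltaEmbeddings 𝕜 X Y δ)
    {ε : ℝ} (hε : 0 < ε) :
    ∃ (Z : Type (max u v w)) (_ : NormedAddCommGroup Z) (_ : NormedSpace 𝕜 Z)
      (_ : FiniteDimensional 𝕜 Z),
      ∀ C : (X →L[𝕜] Z) → ℝ, LipschitzWith 1 C →
        ∃ (γ : Y →ₗᵢ[𝕜] Z) (M : ℝ),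
          ∀ e, |C (γ.toContinuousLinearMap.comp (emb e)) - M| ≤ δ / (2 * (1 + δ)) + ε := by
  obtain ⟨G, _, _, σ, hσ⟩ := exists_perm_compatibleFunctionals hδ hemb (half_pos hε)
  obtain ⟨W, _, _, _, γ, ξ, hξ, hγξ⟩ := exists_amalgam hσ
  obtain ⟨N, hN⟩ := exists_avgIsometry_forall_abs_sub_le hξ hγξ (half_pos hε)
  refine ⟨PiLp 1 (fun _ : Fin N => W), inferInstance, inferInstance, inferInstance, ?_⟩
  simpa only [add_assoc, add_halves] using hN

theorem exists_lipschitzWith_extend {α : Type*} [PseudoMetricSpace α] {s : Set α} {K : ℝ≥0}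
    {c : s → ℝ} (hc : LipschitzWith K c) :
    ∃ C : α → ℝ, LipschitzWith K C ∧ ∀ x : s, C x = c x := by
  have hext (x : s) : extend Subtype.val c 0 x = c x := Subtype.val_injective.extend_apply c 0 x
  obtain ⟨C, hC, hCc⟩ := LipschitzOnWith.extend_real (f := extend Subtype.val c 0) (s := s) <|
    lipschitzOnWith_iff_restrict.2 (by simpa only [Set.domRestrict_def, hext] using hc)
  exact ⟨C, hC, fun x => (hCc x.2).symm.trans (hext x)⟩

theorem srp_fd_complex_normed_spaces_general (X : Type u) (Y : Type v)
    [NormedAddCommGroup X] [NormedSpace 𝕜 X] [FiniteDimensional 𝕜 X]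
    [NormedAddCommGroup Y] [NormedSpace 𝕜 Y] [FiniteDimensional 𝕜 Y]
    (δ : ℝ) (hδ : 0 ≤ δ) (ε : ℝ) (hε : 0 < ε) :
    ∃ (Z : Type (max u v w)) (_ : NormedAddCommGroup Z) (_ : NormedSpace 𝕜 Z)
      (_ : FiniteDimensional 𝕜 Z),
      ∀ c : deltaEmbeddings 𝕜 X Z δ → ℝ, LipschitzWith 1 c →
        ∃ (γ : Y →L[𝕜] Z) (_ : ∀ y, ‖γ y‖ = ‖y‖),
          ∀ η₀ ∈ deltaEmbeddings 𝕜 X Y δ, ∀ η₁ ∈ deltaEmbeddings 𝕜 X Y δ,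
            ∀ (h₀ : γ.comp η₀ ∈ deltaEmbeddings 𝕜 X Z δ)
              (h₁ : γ.comp η₁ ∈ deltaEmbeddings 𝕜 X Z δ),
              |c ⟨γ.comp η₀, h₀⟩ - c ⟨γ.comp η₁, h₁⟩| ≤ ε + δ / (1 + δ) := by
  obtain ⟨S, hS, hSfin, hcover⟩ := finite_approx_of_totallyBounded
    (totallyBounded_deltaEmbeddings (𝕜 := 𝕜) X Y δ) (ε / 4) (by positivity)
  have := hSfin.to_subtype
  obtain ⟨Z, _, _, _, hZ⟩ := exists_isometry_forall_abs_sub_le_of_finite (E := S)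
    (emb := Subtype.val) hδ (fun e => hS e.2) (ε := ε / 4) (by positivity)
  refine ⟨Z, inferInstance, inferInstance, inferInstance, fun c hc => ?_⟩
  obtain ⟨C, hC, hCc⟩ := exists_lipschitzWith_extend hc
  obtain ⟨γ, M, hM⟩ := hZ C hC
  have hmean (η : X →L[𝕜] Y) (hη : η ∈ deltaEmbeddings 𝕜 X Y δ) :
      |C (γ.toContinuousLinearMap.comp η) - M| ≤ δ / (2 * (1 + δ)) + ε / 2 := by
    obtain ⟨e, he, hηe⟩ := Set.mem_iUnion₂.1 (hcover hη)
    have hnet : |C (γ.toContinuousLinearMap.comp η) - C (γ.toContinuousLinearMap.comp e)| ≤ ε / 4 :=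
      calc _ ≤ dist (γ.toContinuousLinearMap.comp η) (γ.toContinuousLinearMap.comp e) := by
            simpa [← Real.dist_eq] using hC.dist_le_mul _ _
        _ = ‖η - e‖ := by
            rw [dist_eq_norm, ← ContinuousLinearMap.comp_sub,
              γ.norm_toContinuousLinearMap_comp]
        _ ≤ ε / 4 := (dist_eq_norm η e).symm.trans_le (mem_ball.1 hηe).le
    linarith [abs_sub_le (C (γ.toContinuousLinearMap.comp η))
      (C (γ.toContinuousLinearMap.comp e)) M, hM ⟨e, he⟩]
  refine ⟨γ.toContinuousLinearMap, γ.norm_map, fun η₀ hη₀ η₁ hη₁ h₀ h₁ => ?_⟩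
  rw [← hCc, ← hCc]
  have hhalves : δ / (1 + δ) = 2 * (δ / (2 * (1 + δ))) := by field_simp
  linarith [abs_sub_le (C (γ.toContinuousLinearMap.comp η₀)) M
    (C (γ.toContinuousLinearMap.comp η₁)), hmean η₀ hη₀, hmean η₁ hη₁,
    abs_sub_comm M (C (γ.toContinuousLinearMap.comp η₁))]

/-- Stable Ramsey property, with stability modulus `ϖ(δ) = δ`, of the class of
finite-dimensional complex normed spaces. -/
theorem srp_fd_complex_normed_spaces
    (X Y : Type u) [NormedAddCommGroup X] [NormedSpace ℂ X] [FiniteDimensional ℂ X]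
    [NormedAddCommGroup Y] [NormedSpace ℂ Y] [FiniteDimensional ℂ Y]
    (δ : ℝ) (hδ : 0 ≤ δ) (ε : ℝ) (hε : 0 < ε) :
    ∃ (Z : Type u) (_ : NormedAddCommGroup Z) (_ : NormedSpace ℂ Z)
      (_ : FiniteDimensional ℂ Z),
      ∀ c : {φ : X →L[ℂ] Z // IsDeltaEmbedding δ φ} → ℝ,
        LipschitzWith 1 c → (∀ φ, c φ ∈ Set.Icc (0 : ℝ) 1) →
        ∃ (γ : Y →L[ℂ] Z) (_ : ∀ y, ‖γ y‖ = ‖y‖),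
          ∀ (η₀ η₁ : X →L[ℂ] Y), IsDeltaEmbedding δ η₀ → IsDeltaEmbedding δ η₁ →
            ∀ (h₀ : IsDeltaEmbedding δ (γ.comp η₀)) (h₁ : IsDeltaEmbedding δ (γ.comp η₁)),
              |c ⟨γ.comp η₀, h₀⟩ - c ⟨γ.comp η₁, h₁⟩| ≤ ε + δ := by
  obtain ⟨Z, _, _, _, hZ⟩ := srp_fd_complex_normed_spaces_general (𝕜 := ℂ) X Y δ hδ ε hε
  refine ⟨Z, inferInstance, inferInstance, inferInstance, fun c hc _ => ?_⟩
  obtain ⟨γ, hγ, hcol⟩ := hZ c hc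
  exact ⟨γ, hγ, fun η₀ η₁ hη₀ hη₁ h₀ h₁ => (hcol η₀ hη₀ η₁ hη₁ h₀ h₁).trans
    (add_le_add_right (div_le_self hδ (le_add_of_nonneg_right hδ)) ε)⟩
end

section
/- For every d, m, r ∈ ℕ and every ε > 0 there exists n ∈ ℕ such that for every coloring c of S(n,d) with r colors there exist γ ∈ S(n,m) and a color j such that for every ρ ∈ S(m,d) there is ρ' ∈ S(n,d) with c(ρ') = j and D(ρ·γ, ρ') ≤ ε, where ρ·γ denotes the matrix product. Here, for k, l ∈ ℕ, S(k,l) denotes the set of l × k real matrices A such that: all entries of A are nonnegative; every column of A sums to 1; every row of A contains an entry equal to 1; and the last column of A equals the last standard basis vector of ℝ^l. The distance is D(A,B) = max over columns j of Σ_i |A_{i j} − B_{i j}|. -/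
/-- `S k l` is the set of `l × k` real matrices with nonnegative entries, each column summing
to `1`, each row containing an entry equal to `1`, and whose last column is the last standard
basis vector of `ℝˡ`. -/
def S (k l : ℕ) : Set (Matrix (Fin l) (Fin k) ℝ) :=
  {A | (∀ i j, 0 ≤ A i j) ∧ (∀ j, ∑ i, A i j = 1) ∧ (∀ i, ∃ j, A i j = 1) ∧
    (∀ (i : Fin l) (j : Fin k), (j : ℕ) = k - 1 →
      A i j = if (i : ℕ) = l - 1 then 1 else 0)}

/-!
A word `w 0, …, w (n - 1)` of points of a finite grid in the simplex is, up to reversal, the list of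
columns of a matrix in `S n d` as soon as it starts with the last vertex and uses every grid point.
Grade the grid by the `ℓ₁` distance to the last vertex. Multiplication by `ρ ∈ S m d`, followed by
rounding, maps one grid to another without raising levels, and every grid point lifts to a point of
the same level because `ρ` maps some vertex to each vertex.

Let `P` enumerate the target grid by increasing level, and let `Q` consist of blocks, the `k`-th of
which lists the points of level at most that of `P k`. Applying the map to `Q` and replacing each
letter that comes before its own block by a neighbour of smaller level, one obtains a word in which
the points of the target grid occur for the first time in the order prescribed by `P`. It is
therefore `P ∘ g` for a rigid surjection `g`, and the theorem reduces to the dual Ramsey theorem of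
Graham and Rothschild: given a colouring of rigid surjections, some `f` gives all `g ∘ f` the same
colour.

The dual Ramsey theorem, for words with `k` letters of which `a` are constants, is proved by
decreasing induction on `a`. For `a = k` it is the Hales–Jewett theorem. For smaller `a`, one first
makes the colour of `g ∘ f` depend only on the part of `g` preceding the first occurrence of the
letter `a`; these prefixes contain constants only, so Hales–Jewett and the pigeonhole principle
apply to them.
-/

universe u v

/-! ### Rigid surjections -/

/-- `IsRecord f y x`: the position `y` is a left-to-right strict maximum of the word
`f 0, f 1, …`, with value `x`. -/
def IsRecord (f : ℕ → ℕ) (y x : ℕ) : Prop :=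
  f y = x ∧ ∀ z < y, f z < x

namespace IsRecord

variable {f g : ℕ → ℕ} {a x y z : ℕ}

lemma comp (hf : IsRecord f z y) (hg : IsRecord g y x) : IsRecord (g ∘ f) z x :=
  ⟨by rw [Function.comp_apply, hf.1, hg.1], fun w hw => hg.2 _ (hf.2 w hw)⟩

lemma congr (hf : IsRecord f y x) (h : Set.EqOn f g (Set.Iic y)) : IsRecord g y x :=
  ⟨(h Set.self_mem_Iic).symm.trans hf.1, fun z hz => h (Set.mem_Iic.mpr hz.le) ▸ hf.2 z hz⟩

lemma le_of_fix (h : IsRecord f y x) (hf : ∀ z < a, f z = z) (hax : a ≤ x) : a ≤ y := by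
  by_contra! hya
  have := h.1
  have := hf y hya
  omega

end IsRecord

lemma isRecord_self_of_fix {f : ℕ → ℕ} {a x : ℕ} (hf : ∀ y < a, f y = y) (hx : x < a) :
    IsRecord f x x :=
  ⟨hf x hx, fun z hz => (hf z (hz.trans hx)).trans_lt hz⟩

lemma exists_isRecord_of_le_monotone {g b : ℕ → ℕ} (hb : Monotone b) (hgb : ∀ j, g j ≤ b j)
    {j : ℕ} (hj : g j = b j) : ∃ i ≤ j, IsRecord g i (g j) := by
  have hex : ∃ i, g i = g j := ⟨j, rfl⟩
  have hle : Nat.find hex ≤ j := Nat.find_min' hex rfl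
  refine ⟨Nat.find hex, hle, Nat.find_spec hex, fun z hz => ?_⟩
  exact (((hgb z).trans (hb (hz.le.trans hle))).trans hj.ge).lt_of_ne (Nat.find_min hex hz)

/-- A rigid surjection from `{0, …, n - 1}` onto `{0, …, m - 1}` (first occurrences of the values
appear in increasing order) which fixes `{0, …, a - 1}` pointwise. It is encoded by a function on
`ℕ` whose values from `n` on are irrelevant. -/
structure IsRigidSurj (a n m : ℕ) (f : ℕ → ℕ) : Prop where
  fix : ∀ y < a, f y = y
  lt : ∀ y < n, f y < m
  exists_isRecord : ∀ x < m, ∃ y < n, IsRecord f y x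

namespace IsRigidSurj

variable {a n m k : ℕ} {f g : ℕ → ℕ}

lemma of_records (han : a ≤ n) (hfix : ∀ y < a, f y = y) (hlt : ∀ y < n, f y < m)
    (hrec : ∀ x, a ≤ x → x < m → ∃ y < n, IsRecord f y x) : IsRigidSurj a n m f where
  fix := hfix
  lt := hlt
  exists_isRecord x hx := (lt_or_ge x a).elim
    (fun hxa => ⟨x, by omega, isRecord_self_of_fix hfix hxa⟩) (hrec x · hx)

lemma id (a n : ℕ) : IsRigidSurj a n n id :=
  ⟨fun _ _ => rfl, fun _ h => h, fun x hx => ⟨x, hx, rfl, fun _ h => h⟩⟩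

lemma comp (hf : IsRigidSurj a n m f) (hg : IsRigidSurj a m k g) :
    IsRigidSurj a n k (g ∘ f) where
  fix y hy := by rw [Function.comp_apply, hf.fix y hy, hg.fix y hy]
  lt y hy := hg.lt _ (hf.lt y hy)
  exists_isRecord x hx := by
    obtain ⟨y, hy, hyx⟩ := hg.exists_isRecord x hx
    obtain ⟨z, hz, hzy⟩ := hf.exists_isRecord y hy
    exact ⟨z, hz, hzy.comp hyx⟩

lemma of_succ_fix (hf : IsRigidSurj (a + 1) n m f) : IsRigidSurj a n m f :=
  ⟨fun y hy => hf.fix y (by omega), hf.lt, hf.exists_isRecord⟩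

lemma succ_fix (hf : IsRigidSurj a n m f) (ha : f a = a) : IsRigidSurj (a + 1) n m f where
  fix y hy := (Nat.lt_succ_iff_lt_or_eq.mp hy).elim (hf.fix y) (by rintro rfl; exact ha)
  lt := hf.lt
  exists_isRecord := hf.exists_isRecord

lemma restrict (hf : IsRigidSurj a n m f) {y x : ℕ} (hyx : IsRecord f y x) (hxm : x ≤ m) :
    IsRigidSurj a y x f where
  fix := hf.fix
  lt := hyx.2
  exists_isRecord w hw := by
    obtain ⟨z, -, hz⟩ := hf.exists_isRecord w (by omega)
    refine ⟨z, ?_, hz⟩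
    by_contra! hyz
    rcases hyz.eq_or_lt with rfl | hyz
    · exact hw.ne (hz.1.symm.trans hyx.1)
    · exact (hz.2 y hyz).not_gt (hyx.1 ▸ hw)

lemma update_top (hf : IsRigidSurj a n m f) (han : a ≤ n) :
    IsRigidSurj a (n + 1) (m + 1) (Function.update f n m) := by
  have heq : ∀ y, y < n → Function.update f n m y = f y := fun y hy =>
    Function.update_of_ne hy.ne _ _
  have hlt : ∀ y < n, Function.update f n m y < m := fun y hy => heq y hy ▸ hf.lt y hy
  refine ⟨fun y hy => (heq y (by omega)).trans (hf.fix y hy), fun y hy => ?_, fun x hx => ?_⟩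
  · rcases Nat.lt_succ_iff_lt_or_eq.mp hy with hy | rfl
    · exact (hlt y hy).trans m.lt_succ_self
    · simp
  · rcases Nat.lt_succ_iff_lt_or_eq.mp hx with hx | rfl
    · obtain ⟨y, hy, hyx⟩ := hf.exists_isRecord x hx
      exact ⟨y, by omega, hyx.congr fun z hz => (heq z (lt_of_le_of_lt hz hy)).symm⟩
    · exact ⟨n, n.lt_succ_self, Function.update_self .., hlt⟩

lemma extend_strictMono {e : Fin m → ℕ} (he : StrictMono e) (hen : ∀ i, e i < n)
    (hfix : ∀ i : Fin m, (i : ℕ) < a → e i = i) (ha : 0 < a) (ham : a ≤ m) :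
    IsRigidSurj a n m (Function.extend e Fin.val 0) ∧
      ∀ i, IsRecord (Function.extend e Fin.val 0) (e i) i := by
  set h := Function.extend e Fin.val 0
  have hval : ∀ i, h (e i) = i := he.injective.extend_apply _ _
  have hzero : ∀ y, (¬∃ i, e i = y) → h y = 0 := Function.extend_apply' _ _
  have hrec : ∀ i, IsRecord h (e i) i := fun i => by
    refine ⟨hval i, fun z hz => ?_⟩
    by_cases hze : ∃ i', e i' = z
    · obtain ⟨i', rfl⟩ := hze
      rw [hval]
      exact he.lt_iff_lt.mp hz
    · rw [hzero z hze]
      by_contra! hi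
      have := hfix i (by omega)
      omega
  refine ⟨⟨fun y hy => ?_, fun y _ => ?_, fun x hx => ⟨e ⟨x, hx⟩, hen _, hrec ⟨x, hx⟩⟩⟩, hrec⟩
  · simpa [hfix ⟨y, by omega⟩ hy] using hval ⟨y, by omega⟩
  · by_cases hye : ∃ i, e i = y
    · obtain ⟨i, rfl⟩ := hye
      exact hval i ▸ i.2
    · rw [hzero y hye]
      omega

end IsRigidSurj

/-- The increasing enumeration of `ℕ \ {a}`. -/
def skip (a y : ℕ) : ℕ := if y < a then y else y + 1

/-- The word `h` with the letter `x` inserted at position `a`. -/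
def insertAt (a x : ℕ) (h : ℕ → ℕ) (y : ℕ) : ℕ :=
  if y < a then h y else if y = a then x else h (y - 1)

lemma skip_of_lt {a y : ℕ} (h : y < a) : skip a y = y := if_pos h

lemma skip_of_le {a y : ℕ} (h : a ≤ y) : skip a y = y + 1 := if_neg h.not_gt

lemma strictMono_skip (a : ℕ) : StrictMono (skip a) := fun y z h => by
  unfold skip
  split_ifs <;> omega

lemma insertAt_of_lt {a y : ℕ} (x : ℕ) (h : ℕ → ℕ) (hy : y < a) : insertAt a x h y = h y :=
  if_pos hy

lemma insertAt_self (a x : ℕ) (h : ℕ → ℕ) : insertAt a x h a = x := by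
  simp [insertAt]

lemma insertAt_succ {a y : ℕ} (x : ℕ) (h : ℕ → ℕ) (hy : a ≤ y) :
    insertAt a x h (y + 1) = h y := by
  simp [insertAt, show ¬y + 1 < a by omega, show y + 1 ≠ a by omega]

lemma comp_insertAt (G : ℕ → ℕ) (a x : ℕ) (h : ℕ → ℕ) :
    G ∘ insertAt a x h = insertAt a (G x) (G ∘ h) := by
  funext y
  simp only [Function.comp_apply, insertAt]
  split_ifs <;> rfl

lemma eqOn_insertAt {a N : ℕ} {g g' : ℕ → ℕ} (h : Set.EqOn g g' (Set.Iio N)) (x : ℕ)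
    (haN : a ≤ N) :
    Set.EqOn (insertAt a x g) (insertAt a x g') (Set.Iio (N + 1)) := fun y hy => by
  have hy : y < N + 1 := hy
  unfold insertAt
  split_ifs
  · exact h (show y < N by omega)
  · rfl
  · exact h (show y - 1 < N by omega)

lemma IsRecord.comp_skip {a i x : ℕ} {g : ℕ → ℕ} (hg : IsRecord g (i + 1) x) (hai : a ≤ i) :
    IsRecord (g ∘ skip a) i x := by
  have hi := skip_of_le hai
  exact ⟨(congrArg g hi).trans hg.1, fun z hz => hg.2 _ (hi ▸ strictMono_skip a hz)⟩

lemma IsRigidSurj.comp_skip {a m k : ℕ} {g : ℕ → ℕ} (hg : IsRigidSurj a (m + 1) k g)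
    (ham : a ≤ m) (hga : g a < a) : IsRigidSurj a m k (g ∘ skip a) := by
  refine .of_records ham (fun y hy => ?_) (fun y hy => ?_) fun x hax hx => ?_
  · rw [Function.comp_apply, skip_of_lt hy, hg.fix y hy]
  · exact hg.lt _ ((strictMono_skip a hy).trans_eq (skip_of_le ham))
  · obtain ⟨y, hy, hyx⟩ := hg.exists_isRecord x hx
    have hay : a ≠ y := by
      rintro rfl
      exact hax.not_gt (hyx.1 ▸ hga)
    obtain ⟨y, rfl⟩ := Nat.exists_eq_add_of_lt ((hyx.le_of_fix hg.fix hax).lt_of_ne hay)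
    exact ⟨a + y, by omega, hyx.comp_skip (by omega)⟩

lemma IsRigidSurj.insertAt_skip_comp {a n m : ℕ} {f : ℕ → ℕ} (hf : IsRigidSurj a n m f)
    (han : a ≤ n) (ham : a ≤ m) :
    IsRigidSurj (a + 1) (n + 1) (m + 1) (insertAt a a (skip a ∘ f)) := by
  have hlow : ∀ y < a, insertAt a a (skip a ∘ f) y = y := fun y hy => by
    rw [insertAt_of_lt _ _ hy, Function.comp_apply, hf.fix y hy, skip_of_lt hy]
  have hhigh : ∀ y, a ≤ y → insertAt a a (skip a ∘ f) (y + 1) = skip a (f y) := fun y =>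
    insertAt_succ _ _
  have hself : insertAt a a (skip a ∘ f) a = a := insertAt_self ..
  have hskip : ∀ y x, f y < x → skip a (f y) < x + 1 := fun y x hyx =>
    (strictMono_skip a hyx).trans_le (by unfold skip; split_ifs <;> omega)
  have hlt : ∀ y x, a ≤ x → (∀ z < y, f z < x) →
      ∀ z < y + 1, insertAt a a (skip a ∘ f) z < x + 1 := fun y x hax hyx z hz => by
    rcases lt_trichotomy z a with hza | rfl | haz
    · rw [hlow z hza]; omega
    · rw [hself]; omega
    · obtain ⟨z, rfl⟩ := Nat.exists_eq_add_of_lt haz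
      rw [hhigh _ (by omega)]
      exact hskip _ _ (hyx _ (by omega))
  refine .of_records (by omega) (fun y hy => ?_) (hlt n m ham hf.lt) fun x hax hx => ?_
  · rcases Nat.lt_succ_iff_lt_or_eq.mp hy with hy | rfl
    exacts [hlow y hy, hself]
  · obtain ⟨x, rfl⟩ := Nat.exists_eq_add_of_lt (show a < x by omega)
    obtain ⟨y, hy, hyx⟩ := hf.exists_isRecord (a + x) (by omega)
    have hay := hyx.le_of_fix hf.fix (by omega)
    refine ⟨y + 1, by omega, ?_, hlt y _ (by omega) hyx.2⟩
    rw [hhigh y hay, hyx.1, skip_of_le (by omega)]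

/-! ### The Graham–Rothschild theorem -/

/-- The Graham–Rothschild property for words with `k` letters, the first `a` of which are
constants: every finite colouring of the rigid surjections onto `{0, …, k - 1}` is constant on
those factoring through a suitable rigid surjection `f` onto `{0, …, m - 1}`. A colouring is defined
on all functions, but may only look at their values below `n`. -/
def DualRamsey (a k : ℕ) : Prop :=
  ∀ m, a ≤ m → ∀ (κ : Type u) [Finite κ], ∃ n, a ≤ n ∧
    ∀ c : (ℕ → ℕ) → κ, DependsOn c (Set.Iio n) →
      ∃ f, IsRigidSurj a n m f ∧ ∃ v, ∀ g, IsRigidSurj a m k g → c (g ∘ f) = v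

theorem DualRamsey.exists_forall_eqOn_Iio {a k : ℕ} (H : DualRamsey.{u} (a + 1) k) (t : ℕ)
    (κ : Type u) [Finite κ] :
    ∃ n, a ≤ n ∧ ∀ c : (ℕ → ℕ) → κ, DependsOn c (Set.Iio n) → ∃ f, IsRigidSurj a n (a + t) f ∧
      ∀ g g', IsRigidSurj a (a + t) k g → IsRigidSurj a (a + t) k g' → ∀ i < a + t,
        IsRecord g i a → IsRecord g' i a → Set.EqOn g g' (Set.Iio i) → c (g ∘ f) = c (g' ∘ f) := by
  induction t generalizing κ with
  | zero =>
    refine ⟨a, le_rfl, fun c _ => ⟨id, .id a a, fun g g' hg _ i hi hgi => ?_⟩⟩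
    exact absurd hi (hgi.le_of_fix hg.fix le_rfl).not_gt
  | succ t ih =>
    obtain ⟨N, haN, hN⟩ := ih (Fin a → κ)
    obtain ⟨n, hn, hF⟩ := H (N + 1) (by omega) κ
    refine ⟨n, by omega, fun c hc => ?_⟩
    obtain ⟨F, hFrigid, v, hv⟩ := hF c hc
    obtain ⟨f, hf, hfc⟩ := hN (fun h x => c (insertAt a x h ∘ F)) fun h h' hh =>
      funext fun x => hc fun y hy => eqOn_insertAt hh x haN (hFrigid.lt y hy)
    have hlift := hf.insertAt_skip_comp haN (by omega)
    refine ⟨insertAt a a (skip a ∘ f) ∘ F, (hFrigid.comp hlift).of_succ_fix,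
      fun g g' hg hg' i hi hgi hgi' heq => ?_⟩
    have hfactor (G : ℕ → ℕ) : G ∘ insertAt a a (skip a ∘ f) ∘ F =
        insertAt a (G a) ((G ∘ skip a) ∘ f) ∘ F := by
      rw [← Function.comp_assoc, comp_insertAt, Function.comp_assoc]
    -- Either `g` fixes `a` as well, or `g a` is a constant and deleting position `a` decreases `t`.
    rcases (hgi.le_of_fix hg.fix le_rfl).eq_or_lt with rfl | hai
    · exact (hv _ (hlift.comp (hg.succ_fix hgi.1))).trans
        (hv _ (hlift.comp (hg'.succ_fix hgi'.1))).symm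
    · obtain ⟨j, rfl⟩ := Nat.exists_eq_add_of_lt hai
      have hga : g a < a := hgi.2 a hai
      have hgg' : g a = g' a := heq hai
      rw [hfactor, hfactor, ← hgg']
      refine congrFun (hfc _ _ (hg.comp_skip (m := a + t) (by omega) hga)
        (hg'.comp_skip (m := a + t) (by omega) (hgg' ▸ hga)) (a + j) (by omega)
        (hgi.comp_skip (by omega)) (hgi'.comp_skip (by omega)) fun y hy => heq ?_) ⟨g a, hga⟩
      exact (strictMono_skip a hy).trans_eq (skip_of_le (by omega))

/-- The word `0, 1, …, a - 1, w 0, w 1, …, w (N - 1)`, continued by zeros. -/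
def prependId (a : ℕ) {N : ℕ} (w : Fin N → ℕ) (y : ℕ) : ℕ :=
  if y < a then y else if h : y - a < N then w ⟨y - a, h⟩ else 0

section prependId

variable {a N m : ℕ} (w : Fin N → ℕ)

lemma prependId_of_lt {y : ℕ} (hy : y < a) : prependId a w y = y := if_pos hy

lemma prependId_add (j : Fin N) : prependId a w (a + j) = w j := by
  simp [prependId]

lemma eqOn_comp_prependId {g : ℕ → ℕ} (hg : ∀ y < a, g y = y) :
    Set.EqOn (g ∘ prependId a w) (prependId a (g ∘ w)) (Set.Iio (a + N)) := fun y hy => by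
  rcases lt_or_ge y a with hya | hay
  · rw [Function.comp_apply, prependId_of_lt w hya, prependId_of_lt _ hya, hg y hya]
  · obtain ⟨j, rfl⟩ : ∃ j : Fin N, y = a + j :=
      ⟨⟨y - a, by grind⟩, by grind⟩
    rw [Function.comp_apply, prependId_add, prependId_add, Function.comp_apply]

variable {w}

lemma isRigidSurj_prependId (ham : a ≤ m) (hlt : ∀ j, w j < m)
    (hrec : ∀ x, a ≤ x → x < m → ∃ j, w j = x ∧ ∀ i < j, w i < x) :
    IsRigidSurj a (a + N) m (prependId a w) := by
  have hcases : ∀ y < a + N, y < a ∨ ∃ j : Fin N, y = a + j := fun y hy =>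
    or_iff_not_imp_left.mpr fun hya => ⟨⟨y - a, by omega⟩, by simp; omega⟩
  refine .of_records (by omega) (fun y => prependId_of_lt w) (fun y hy => ?_) fun x hax hx => ?_
  · rcases hcases y hy with hya | ⟨j, rfl⟩
    · rw [prependId_of_lt w hya]; omega
    · exact (prependId_add w j).trans_lt (hlt j)
  · obtain ⟨j, hjx, hj⟩ := hrec x hax hx
    refine ⟨a + j, by omega, (prependId_add w j).trans hjx, fun z hz => ?_⟩
    rcases hcases z (by omega) with hza | ⟨i, rfl⟩
    · rw [prependId_of_lt w hza]; omega
    · exact (prependId_add w i).trans_lt (hj i (by omega))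

end prependId

lemma exists_perm_strictMono_firstOccurrence {ι : Type u} {α : Type v} [LinearOrder ι]
    [WellFoundedLT ι] {t : ℕ} {l : ι → α ⊕ Fin t} (hl : ∀ e, ∃ j, l j = .inr e) :
    ∃ σ : Equiv.Perm (Fin t), ∀ e, ∃ j, l j = .inr e ∧
      ∀ i < j, ∀ e', l i = .inr e' → σ e' < σ e := by
  choose first hfirst hmin using fun e => WellFounded.has_min (wellFounded_lt (α := ι))
    {j | l j = .inr e} (hl e)
  have hinj : Function.Injective first := fun e e' h =>
    Sum.inr_injective ((hfirst e).symm.trans ((congrArg l h).trans (hfirst e')))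
  have hmono : StrictMono (first ∘ Tuple.sort first) :=
    (Tuple.monotone_sort first).strictMono_of_injective (hinj.comp (Equiv.injective _))
  refine ⟨(Tuple.sort first).symm, fun e => ⟨first e, hfirst e, fun i hi e' hie' => ?_⟩⟩
  rw [← hmono.lt_iff_lt]
  simpa using (not_lt.mp (hmin e' i hie')).trans_lt hi

/-- For `k = a` this is the Hales–Jewett theorem, up to sorting the parameters of the subspace
by first occurrence. -/
theorem dualRamsey_self (a : ℕ) : DualRamsey.{u} a a := by
  intro m ham κ _
  obtain ⟨t, rfl⟩ := Nat.exists_eq_add_of_le ham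
  obtain ⟨ι, _, hι⟩ := Combinatorics.Subspace.exists_mono_in_high_dimension (Fin a) κ (Fin t)
  let E : ι ≃ Fin (Fintype.card ι) := Fintype.equivFin ι
  refine ⟨a + Fintype.card ι, by omega, fun c hc => ?_⟩
  obtain ⟨l, v, hlv⟩ := hι fun w => c (prependId a fun j => w (E.symm j))
  obtain ⟨σ, hσ⟩ := exists_perm_strictMono_firstOccurrence (l := l.idxFun ∘ E.symm) fun e =>
    (l.proper e).imp' E fun i hi => by simp [hi]
  let w : Fin (Fintype.card ι) → ℕ := fun j =>
    (l.idxFun (E.symm j)).elim Fin.val fun e => a + σ e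
  have hw : IsRigidSurj a (a + Fintype.card ι) (a + t) (prependId a w) := by
    refine isRigidSurj_prependId ham (fun j => ?_) fun x hax hx => ?_
    · simp only [w]
      rcases l.idxFun (E.symm j) with x | e <;> simp only [Sum.elim_inl, Sum.elim_inr] <;> omega
    · obtain ⟨j, hj, hjmin⟩ := hσ (σ.symm ⟨x - a, by omega⟩)
      refine ⟨j, ?_, fun i hij => ?_⟩
      · simp_all [w]
      · rcases hi : l.idxFun (E.symm i) with y | e <;>
          simp only [w, hi, Sum.elim_inl, Sum.elim_inr]
        · omega
        · have := hjmin i hij e hi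
          rw [Equiv.apply_symm_apply, Fin.lt_def] at this
          simp only at this
          omega
  refine ⟨prependId a w, hw, v, fun g hg => ?_⟩
  rw [← hlv fun e => ⟨g (a + σ e), hg.lt _ (by omega)⟩]
  refine hc fun y hy => (eqOn_comp_prependId w hg.fix hy).trans ?_
  congr 1
  funext j
  rcases hj : l.idxFun (E.symm j) with x | e <;>
    simp [w, hj, Combinatorics.Subspace.apply_def, hg.fix]

/-- The lengths of the prefixes are treated from the longest one down, so that each application of
Hales–Jewett only alters the shorter prefixes, which have not been treated yet. -/
theorem exists_isRigidSurj_prefix_color (a t : ℕ) (κ : Type u) [Finite κ] :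
    ∃ M, a ≤ M ∧ ∀ c : ℕ → (ℕ → ℕ) → κ, (∀ j < M, DependsOn (c j) (Set.Iio j)) →
      ∃ f, IsRigidSurj a M (a + t) f ∧ ∀ i, a ≤ i → i < a + t →
        ∃ j < M, IsRecord f j i ∧ ∃ v, ∀ p, IsRigidSurj a i a p → c j (p ∘ f) = v := by
  induction t with
  | zero => exact ⟨a, le_rfl, fun c _ => ⟨id, .id a a, fun i hai hi => absurd hi hai.not_gt⟩⟩
  | succ t ih =>
    obtain ⟨M, haM, hM⟩ := ih
    obtain ⟨L, haL, hL⟩ := dualRamsey_self a M haM κ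
    refine ⟨L + 1, by omega, fun c hc => ?_⟩
    obtain ⟨F, hF, vtop, hvtop⟩ := hL (c L) (hc L L.lt_succ_self)
    choose! φ hφL hφ using hF.exists_isRecord
    obtain ⟨f, hf, hfc⟩ := hM (fun i p => c (φ i) (p ∘ F)) fun j hj p p' hpp' =>
      hc _ ((hφL j hj).trans L.lt_succ_self) fun y hy => hpp' _ ((hφ j hj).2 y hy)
    have heq : Set.EqOn (f ∘ F) (Function.update (f ∘ F) L (a + t)) (Set.Iio L) := fun y hy =>
      (Function.update_of_ne (ne_of_lt hy) _ _).symm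
    have hcolor : ∀ j ≤ L, ∀ p, c j (p ∘ Function.update (f ∘ F) L (a + t)) = c j (p ∘ f ∘ F) :=
      fun j hj p => hc j (Nat.lt_succ_of_le hj) fun y hy =>
        congrArg p (heq (lt_of_lt_of_le hy hj)).symm
    have hcomp := hF.comp hf
    refine ⟨_, hcomp.update_top haL, fun i hai hi => ?_⟩
    rcases Nat.lt_succ_iff_lt_or_eq.mp (show i < a + t + 1 from hi) with hi | rfl
    · obtain ⟨j, hj, hji, v, hv⟩ := hfc i hai hi
      have hφj := hφL j hj
      refine ⟨φ j, by omega, ((hφ j hj).comp hji).congr fun z hz => heq (lt_of_le_of_lt hz hφj),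
        v, fun p hp => (hcolor _ hφj.le p).trans (hv p hp)⟩
    · refine ⟨L, L.lt_succ_self, ⟨Function.update_self .., fun z hz => ?_⟩, vtop, fun p hp => ?_⟩
      · exact heq hz ▸ hcomp.lt z hz
      · exact (hcolor L le_rfl p).trans (hvtop _ (hf.comp hp))

lemma exists_strictMono_mem_of_le_card {a m : ℕ} {s : Finset ℕ} (hs : ∀ x ∈ s, a ≤ x)
    (hm : m ≤ s.card) : ∃ e : Fin m → ℕ, StrictMono e ∧ (∀ i : Fin m, (i : ℕ) < a → e i = i) ∧
      ∀ i : Fin m, a ≤ i → e i ∈ s := by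
  let o : Fin m → ℕ := fun i => s.orderEmbOfFin rfl (Fin.castLE hm i)
  have homem : ∀ i, o i ∈ s := fun i => s.orderEmbOfFin_mem rfl _
  refine ⟨fun i => if (i : ℕ) < a then i else o i, fun i j hij => ?_, fun i hi => if_pos hi,
    fun i hi => by simpa only [if_neg hi.not_gt] using homem i⟩
  have hij' : (i : ℕ) < j := hij
  have hoij : o i < o j := (s.orderEmbOfFin rfl).strictMono hij
  have := hs _ (homem j)
  dsimp only
  split_ifs <;> omega

theorem exists_isRigidSurj_prefix_monochromatic {a m : ℕ} (ha : 0 < a) (ham : a ≤ m)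
    (κ : Type u) [Finite κ] :
    ∃ M, a ≤ M ∧ ∀ c : ℕ → (ℕ → ℕ) → κ, (∀ j < M, DependsOn (c j) (Set.Iio j)) →
      ∃ f, IsRigidSurj a M m f ∧ ∃ v, ∀ i, a ≤ i → i < m →
        ∃ j < M, IsRecord f j i ∧ ∀ p, IsRigidSurj a i a p → c j (p ∘ f) = v := by
  classical
  have := Fintype.ofFinite κ
  set T := a + Fintype.card κ * m with hT
  obtain ⟨M, haM, hM⟩ := exists_isRigidSurj_prefix_color a (Fintype.card κ * m) κ
  refine ⟨M, haM, fun c hc => ?_⟩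
  obtain ⟨f, hf, hfc⟩ := hM c hc
  have : Nonempty κ := ⟨c 0 id⟩
  choose! j hjM hj v hv using hfc
  obtain ⟨v₀, -, hv₀⟩ := Finset.exists_le_card_fiber_of_mul_le_card_of_maps_to
    (s := Finset.Ico a T) (t := (Finset.univ : Finset κ)) (f := v) (n := m)
    (fun _ _ => Finset.mem_univ _) Finset.univ_nonempty (by simp [hT])
  obtain ⟨e, he, hefix, hes⟩ :=
    exists_strictMono_mem_of_le_card (a := a) (by simp +contextual) hv₀
  simp only [Finset.mem_filter, Finset.mem_Ico] at hes
  have heT : ∀ i, e i < T := fun i => by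
    by_cases hi : (i : ℕ) < a
    · rw [hefix i hi]; omega
    · exact (hes i (not_lt.mp hi)).1.2
  obtain ⟨hh, hrec⟩ := IsRigidSurj.extend_strictMono he heT hefix ha ham
  refine ⟨_, hf.comp hh, v₀, fun i hai him => ?_⟩
  obtain ⟨⟨hae, -⟩, hve⟩ := hes ⟨i, him⟩ hai
  have hei := hrec ⟨i, him⟩
  refine ⟨j (e ⟨i, him⟩), hjM _ hae (heT _), (hj _ hae (heT _)).comp hei, fun p hp => ?_⟩
  exact (hv _ hae (heT _) _ ((hh.restrict hei him.le).comp hp)).trans hve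

theorem DualRamsey.of_succ {a k : ℕ} (ha : 0 < a) (hak : a < k) (H : DualRamsey.{u} (a + 1) k) :
    DualRamsey.{u} a k := by
  intro m ham κ _
  obtain ⟨M, haM, hM⟩ := exists_isRigidSurj_prefix_monochromatic ha ham κ
  obtain ⟨t, rfl⟩ := Nat.exists_eq_add_of_le haM
  obtain ⟨n, han, hn⟩ := H.exists_forall_eqOn_Iio t κ
  refine ⟨n, han, fun c hc => ?_⟩
  obtain ⟨f₁, hf₁, hf₁c⟩ := hn c hc
  have : Nonempty κ := ⟨c id⟩
  let extensionColor (j : ℕ) (p : ℕ → ℕ) (v : κ) : Prop := ∃ G, IsRigidSurj a (a + t) k G ∧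
    IsRecord G j a ∧ Set.EqOn G p (Set.Iio j) ∧ c (G ∘ f₁) = v
  obtain ⟨f₂, hf₂, v, hv⟩ := hM (fun j p => Classical.epsilon (extensionColor j p))
    fun j _ p p' hpp' => by
      have (G : ℕ → ℕ) : Set.EqOn G p (Set.Iio j) ↔ Set.EqOn G p' (Set.Iio j) :=
        forall₂_congr fun y hy => by rw [hpp' y hy]
      simp only [extensionColor, this]
  refine ⟨f₂ ∘ f₁, hf₁.comp hf₂, v, fun g hg => ?_⟩
  obtain ⟨i, him, hi⟩ := hg.exists_isRecord a hak
  obtain ⟨j, hjM, hj, hjv⟩ := hv i (hi.le_of_fix hg.fix le_rfl) him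
  have hgf₂ := hf₂.comp hg
  have hrec : IsRecord (g ∘ f₂) j a := hj.comp hi
  obtain ⟨G, hG, hGj, hGeq, hGv⟩ := Classical.epsilon_spec (p := extensionColor j (g ∘ f₂))
    ⟨_, g ∘ f₂, hgf₂, hrec, fun _ _ => rfl, rfl⟩
  calc c (g ∘ f₂ ∘ f₁) = c (G ∘ f₁) := (hf₁c G _ hG hgf₂ j hjM hGj hrec hGeq).symm
    _ = v := hGv.trans (hjv g (hg.restrict hi hak.le))

theorem dualRamsey {a k : ℕ} (ha : 0 < a) (hak : a ≤ k) : DualRamsey.{u} a k :=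
  Nat.decreasingInduction' (fun _ hbk hab => .of_succ (ha.trans_le hab) hbk) hak
    (dualRamsey_self k)

/-! ### Words over graded alphabets -/

section Levels

variable {X : Type u} {Y : Type v} {lx : X → ℕ} {ly : Y → ℕ} {x₀ : X}

/-- A surjection `φ` between types graded by `ly` and `lx` which does not raise levels and along
which every point lifts to a point of at most its level: the combinatorial counterpart of a
positive contractive quotient mapping. -/
structure IsLevelQuotient (ly : Y → ℕ) (lx : X → ℕ) (φ : Y → X) : Prop where
  level_le : ∀ y, lx (φ y) ≤ ly y
  exists_lift : ∀ x, ∃ y, φ y = x ∧ ly y ≤ lx x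

/-- The first `n` letters of `w` exhaust the alphabet `X`, and the first one is `x₀`. -/
def IsFullWord (x₀ : X) (n : ℕ) (w : ℕ → X) : Prop :=
  w 0 = x₀ ∧ ∀ x, ∃ y < n, w y = x

lemma IsFullWord.comp_isRigidSurj {n m : ℕ} {w : ℕ → X} {f : ℕ → ℕ} (hw : IsFullWord x₀ m w)
    (hf : IsRigidSurj 1 n m f) : IsFullWord x₀ n (w ∘ f) := by
  refine ⟨by rw [Function.comp_apply, hf.fix 0 one_pos, hw.1], fun x => ?_⟩
  obtain ⟨k, hk, hkx⟩ := hw.2 x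
  obtain ⟨y, hy, hyk, -⟩ := hf.exists_isRecord k hk
  exact ⟨y, hy, (congrArg w hyk).trans hkx⟩

lemma exists_injective_rank {α : Type*} [LinearOrder α] [Finite X] (l : X → α) :
    ∃ rk : X → ℕ, Function.Injective rk ∧ Set.range rk = Set.Iio (Nat.card X) ∧
      ∀ x x', l x < l x' → rk x < rk x' := by
  let f := l ∘ (Finite.equivFin X).symm
  let e := (Finite.equivFin X).trans (Tuple.sort f).symm
  refine ⟨fun x => e x, Fin.val_injective.comp e.injective, ?_, fun x x' h => ?_⟩
  · rw [Set.range_comp' Fin.val, e.range_eq_univ, Set.image_univ, Fin.range_val]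
  · by_contra! hle
    have := Tuple.monotone_sort f (show e x' ≤ e x from hle)
    simp only [f, e, Function.comp_apply, Equiv.trans_apply, Equiv.apply_symm_apply,
      Equiv.symm_apply_apply] at this
    exact this.not_gt h

lemma exists_block_word [Finite Y] {A : ℕ → Set Y} (hA : ∀ k, (A k).Nonempty) :
    ∃ (B : ℕ) (Q : ℕ → Y), 0 < B ∧ (∀ j, Q j ∈ A (j / B)) ∧
      ∀ k, ∀ y ∈ A k, ∃ j, j / B = k ∧ Q j = y := by
  classical
  have : Nonempty Y := ⟨(hA 0).some⟩
  have hB : 0 < Nat.card Y := Nat.card_pos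
  let e := (Finite.equivFin Y).symm
  let letter (j : ℕ) : Y := e ⟨j % Nat.card Y, Nat.mod_lt j hB⟩
  refine ⟨Nat.card Y, fun j => if letter j ∈ A (j / Nat.card Y) then letter j
    else (hA (j / Nat.card Y)).some, hB, fun j => ?_, fun k y hy => ?_⟩
  · dsimp only
    split_ifs with h
    exacts [h, (hA _).some_mem]
  · have hdiv : (k * Nat.card Y + e.symm y) / Nat.card Y = k := by
      rw [mul_comm, Nat.mul_add_div hB, Nat.div_eq_of_lt (e.symm y).2, add_zero]
    have hletter : letter (k * Nat.card Y + e.symm y) = y := by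
      simp only [letter, Nat.mul_add_mod_of_lt (e.symm y).2, Fin.eta, Equiv.apply_symm_apply]
    refine ⟨k * Nat.card Y + e.symm y, hdiv, ?_⟩
    dsimp only
    rw [hdiv, hletter, if_pos hy]

lemma rank_eq_zero {rk : X → ℕ} {K : ℕ} (hrk : Set.range rk = Set.Iio K)
    (hrk_lt : ∀ x x', lx x < lx x' → rk x < rk x') (hx₀ : ∀ x, lx x ≤ lx x₀ → x = x₀) :
    rk x₀ = 0 := by
  obtain ⟨x, hx⟩ := hrk.superset (show 0 < K from
    (Nat.zero_le _).trans_lt (hrk.subset ⟨x₀, rfl⟩))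
  rw [← hx₀ x, hx]
  by_contra! h
  exact Nat.not_lt_zero _ (hx ▸ hrk_lt _ _ h)

/-- Demoting the letters `φ (Q j)` whose rank exceeds the number of the block containing `j` makes
the word of ranks grow by at most one new letter per block, hence rigid. -/
theorem isRigidSurj_demoted {rk : X → ℕ} {D : X → X} {K B : ℕ} {Q : ℕ → Y} {φ : Y → X}
    (hrk : Set.range rk = Set.Iio K) (hrk_lt : ∀ x x', lx x < lx x' → rk x < rk x')
    (hx₀ : rk x₀ = 0) (hD : ∀ x ≠ x₀, lx (D x) < lx x) (hB : 0 < B)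
    (hQ : ∀ j x, rk x = j / B → ly (Q j) ≤ lx x)
    (hQ_surj : ∀ x y, ly y ≤ lx x → ∃ j, j / B = rk x ∧ Q j = y) (hφ : IsLevelQuotient ly lx φ) :
    IsRigidSurj 1 ((K + 1) * B) K
      fun j => if rk (φ (Q j)) ≤ j / B then rk (φ (Q j)) else rk (D (φ (Q j))) := by
  set g : ℕ → ℕ := fun j => if rk (φ (Q j)) ≤ j / B then rk (φ (Q j)) else rk (D (φ (Q j))) with hg
  have hrkK : ∀ x, rk x < K := fun x => hrk.subset ⟨x, rfl⟩
  have hgle : ∀ j, g j ≤ j / B := fun j => by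
    simp only [hg]
    split_ifs with h
    · exact h
    obtain ⟨x, hx⟩ := hrk.superset (show j / B < K from (not_le.mp h).trans (hrkK _))
    have hne : φ (Q j) ≠ x₀ := fun h₀ => h (by simp [h₀, hx₀])
    exact hx ▸ (hrk_lt _ _ ((hD _ hne).trans_le ((hφ.level_le _).trans (hQ j x hx)))).le
  refine ⟨fun y hy => ?_, fun y _ => ?_, fun k hk => ?_⟩
  · obtain rfl := Nat.lt_one_iff.mp hy
    simpa using hgle 0
  · simp only [hg]
    split_ifs <;> exact hrkK _
  · obtain ⟨x, rfl⟩ := hrk.superset hk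
    obtain ⟨y, rfl, hy⟩ := hφ.exists_lift x
    obtain ⟨j, hj, rfl⟩ := hQ_surj _ y hy
    have hgj : g j = rk (φ (Q j)) := if_pos hj.ge
    obtain ⟨i, hij, hi⟩ := exists_isRecord_of_le_monotone
      (fun _ _ => Nat.div_le_div_right) hgle (hgj.trans hj.symm)
    refine ⟨i, hij.trans_lt ?_, hgj ▸ hi⟩
    rw [← Nat.div_lt_iff_lt_mul hB, hj]
    exact (hrkK _).trans K.lt_succ_self

theorem exists_isFullWord_isLevelQuotient [Finite X] [Finite Y] {y₀ : Y}
    (hlx : ∀ x, lx x = 0 ↔ x = x₀) (hly : ∀ y, ly y = 0 ↔ y = y₀) {D : X → X}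
    (hD : ∀ x ≠ x₀, lx (D x) < lx x) :
    ∃ (K M : ℕ) (P : ℕ → X) (Q : ℕ → Y), IsFullWord x₀ K P ∧ IsFullWord y₀ M Q ∧
      ∀ φ, IsLevelQuotient ly lx φ → ∃ g, IsRigidSurj 1 M K g ∧
        ∀ j, P (g j) = φ (Q j) ∨ P (g j) = D (φ (Q j)) := by
  obtain ⟨rk, hrk_inj, hrk, hrk_lt⟩ := exists_injective_rank lx
  set K := Nat.card X
  have hrkK : ∀ x, rk x < K := fun x => hrk.subset ⟨x, rfl⟩
  have hx₀ : rk x₀ = 0 := rank_eq_zero hrk hrk_lt fun x hx => by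
    rwa [(hlx x₀).mpr rfl, Nat.le_zero, hlx] at hx
  have : Nonempty X := ⟨x₀⟩
  have hP := Function.leftInverse_invFun hrk_inj
  obtain ⟨B, Q, hB, hQ, hQ_surj⟩ := exists_block_word
    (A := fun k => {y | ∀ x, rk x = k → ly y ≤ lx x})
    fun k => ⟨y₀, fun x _ => by simp [(hly y₀).mpr rfl]⟩
  have hP_full : IsFullWord x₀ K (Function.invFun rk) :=
    ⟨hx₀ ▸ hP x₀, fun x => ⟨rk x, hrkK x, hP x⟩⟩
  have hQ_full : IsFullWord y₀ ((K + 1) * B) Q := by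
    refine ⟨?_, fun y => ?_⟩
    · have := hQ 0 x₀ (by simp [hx₀])
      rwa [(hlx x₀).mpr rfl, Nat.le_zero, hly] at this
    · obtain ⟨j, hj, hjy⟩ := hQ_surj K y fun x hx => absurd hx (hrkK x).ne
      exact ⟨j, (Nat.div_lt_iff_lt_mul hB).mp (hj ▸ K.lt_succ_self), hjy⟩
  refine ⟨K, (K + 1) * B, Function.invFun rk, Q, hP_full, hQ_full, fun φ hφ => ⟨_,
    isRigidSurj_demoted hrk hrk_lt hx₀ hD hB hQ (fun x y hy => hQ_surj _ _ fun x' hx' => ?_) hφ,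
    fun j => ?_⟩⟩
  · exact hrk_inj hx' ▸ hy
  · split_ifs
    exacts [.inl (hP _), .inr (hP _)]

end Levels

/-! ### Grids in the simplex -/

section Rounding

variable {ι κ R : Type*} [Fintype ι] [CommRing R] [LinearOrder R] [IsStrictOrderedRing R]
  {A : Matrix ι κ R}

lemma col_eq_single_of_apply_eq_one [DecidableEq ι] (hA : ∀ i j, 0 ≤ A i j)
    (hA_col : ∀ j, ∑ i, A i j ≤ 1) {i : ι} {j : κ} (hij : A i j = 1) :
    A.col j = Pi.single i 1 := by
  funext i'
  rcases eq_or_ne i' i with rfl | hne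
  · rw [Pi.single_eq_same, Matrix.col_apply, hij]
  · have := (Finset.add_le_sum (fun k _ => hA k j) (Finset.mem_univ i) (Finset.mem_univ i')
      hne.symm).trans (hA_col j)
    rw [Pi.single_eq_of_ne hne]
    exact le_antisymm (by rw [Matrix.col_apply]; linarith) (hA i' j)

variable [Fintype κ]

lemma sum_floor_mulVec_natCast_le [FloorSemiring R] (hA : ∀ i j, 0 ≤ A i j)
    (hA_col : ∀ j, ∑ i, A i j ≤ 1) (w : κ → ℕ) :
    ∑ i, ⌊A.mulVec (Nat.cast ∘ w) i⌋₊ ≤ ∑ j, w j := by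
  rw [← Nat.cast_le (α := R)]
  push_cast
  calc ∑ i, (⌊A.mulVec (Nat.cast ∘ w) i⌋₊ : R)
      ≤ ∑ i, ∑ j, A i j * w j := Finset.sum_le_sum fun i _ =>
        Nat.floor_le (dotProduct_nonneg_of_nonneg (hA i) fun _ => Nat.cast_nonneg _)
    _ = ∑ j, (∑ i, A i j) * w j := by rw [Finset.sum_comm]; simp only [Finset.sum_mul]
    _ ≤ ∑ j, (w j : R) := Finset.sum_le_sum fun j _ =>
      mul_le_of_le_one_left (Nat.cast_nonneg _) (hA_col j)

lemma exists_mulVec_eq_natCast (hA : ∀ i j, 0 ≤ A i j) (hA_col : ∀ j, ∑ i, A i j ≤ 1)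
    (hA_row : ∀ i, ∃ j, A i j = 1) (u : ι → ℕ) :
    ∃ w : κ → ℕ, ∑ j, w j = ∑ i, u i ∧ A.mulVec (Nat.cast ∘ w) = Nat.cast ∘ u := by
  classical
  choose J hJ using hA_row
  refine ⟨∑ i, Pi.single (J i) (u i), ?_, ?_⟩
  · simp only [Finset.sum_apply]
    rw [Finset.sum_comm]
    simp
  · have hcast : (Nat.cast ∘ (∑ i, Pi.single (J i) (u i) : κ → ℕ) : κ → R) =
        ∑ i, Pi.single (J i) (u i : R) := by
      funext j
      simp [Finset.sum_apply, Pi.single_apply]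
    rw [hcast, Matrix.mulVec_sum]
    simp only [Matrix.mulVec_single, col_eq_single_of_apply_eq_one hA hA_col (hJ _)]
    funext i
    simp [Finset.sum_apply, Pi.single_apply]

end Rounding

lemma sum_abs_sub_le_of_castSucc {R : Type*} [CommRing R] [LinearOrder R] [IsStrictOrderedRing R]
    {d : ℕ} {x y : Fin (d + 1) → R} {δ : R}
    (hxy : ∑ i, x i = ∑ i, y i) (h : ∀ i : Fin d, |x i.castSucc - y i.castSucc| ≤ δ) :
    ∑ i, |x i - y i| ≤ 2 * d * δ := by
  have hsum : ∑ i : Fin d, |x i.castSucc - y i.castSucc| ≤ d * δ := by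
    simpa using Finset.sum_le_card_nsmul Finset.univ _ δ fun i _ => h i
  have hlast : |x (Fin.last d) - y (Fin.last d)| ≤ ∑ i : Fin d, |x i.castSucc - y i.castSucc| := by
    rw [Fin.sum_univ_castSucc, Fin.sum_univ_castSucc] at hxy
    rw [abs_sub_comm, show y (Fin.last d) - x (Fin.last d) =
      ∑ i : Fin d, (x i.castSucc - y i.castSucc) by rw [Finset.sum_sub_distrib]; linarith]
    exact Finset.abs_sum_le_sum_abs _ _
  rw [Fin.sum_univ_castSucc]
  linarith

/-- The points of `L • Δ` with integer coordinates, where `Δ` is the standard simplex of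
`ℝ^(d + 1)`; the last coordinate, which is determined by the others, is omitted. -/
@[ext]
structure SimplexGrid (d L : ℕ) where
  coord : Fin d → ℕ
  sum_coord_le : ∑ i, coord i ≤ L

namespace SimplexGrid

variable {d m L : ℕ}

instance : Finite (SimplexGrid d L) := by
  refine Finite.of_injective (β := Set.Iic fun _ : Fin d => L) (fun u => ⟨u.coord, fun i => ?_⟩)
    fun u v huv => SimplexGrid.ext (congrArg Subtype.val huv)
  exact (Finset.single_le_sum (fun _ _ => Nat.zero_le _) (Finset.mem_univ i)).trans u.sum_coord_le

instance : Zero (SimplexGrid d L) := ⟨⟨0, by simp⟩⟩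

@[simp]
lemma coord_zero : (0 : SimplexGrid d L).coord = 0 := rfl

/-- The sum of the coordinates other than the last one, i.e. half the `ℓ₁` distance from a grid
point of `L • Δ` to the last vertex. -/
def level (u : SimplexGrid d L) : ℕ := ∑ i, u.coord i

lemma level_eq_zero {u : SimplexGrid d L} : u.level = 0 ↔ u = 0 := by
  simp [level, SimplexGrid.ext_iff, funext_iff]

/-- A neighbouring point of smaller level, obtained by subtracting one from every nonzero
coordinate other than the last one. -/
def demote (u : SimplexGrid d L) : SimplexGrid d L :=
  ⟨u.coord - 1, (Finset.sum_le_sum fun _ _ => Nat.sub_le _ _).trans u.sum_coord_le⟩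

lemma level_demote_lt {u : SimplexGrid d L} (hu : u ≠ 0) : u.demote.level < u.level := by
  obtain ⟨i, hi⟩ := Function.ne_iff.mp fun h => hu (SimplexGrid.ext h)
  exact Finset.sum_lt_sum (fun _ _ => Nat.sub_le _ _)
    ⟨i, Finset.mem_univ i, Nat.sub_lt (Nat.pos_of_ne_zero hi) one_pos⟩

lemma abs_sub_demote_le (u : SimplexGrid d L) (i : Fin d) :
    |(u.coord i : ℝ) - u.demote.coord i| ≤ 1 := by
  have hle : u.coord i ≤ u.demote.coord i + 1 := Nat.le_add_of_sub_le le_rfl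
  have hle' : (u.coord i : ℝ) ≤ u.demote.coord i + 1 := mod_cast hle
  have hge : (u.demote.coord i : ℝ) ≤ u.coord i := mod_cast Nat.sub_le _ _
  rw [abs_le]
  constructor <;> linarith

/-- The point of the standard simplex of `ℝ^(d + 1)` represented by a grid point. -/
noncomputable def point (u : SimplexGrid d L) : Fin (d + 1) → ℝ :=
  Fin.snoc (α := fun _ => ℝ) (fun i => u.coord i / L) (1 - ∑ i, (u.coord i / L : ℝ))

@[simp]
lemma point_castSucc (u : SimplexGrid d L) (i : Fin d) : u.point i.castSucc = u.coord i / L :=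
  Fin.snoc_castSucc ..

@[simp]
lemma point_last (u : SimplexGrid d L) : u.point (Fin.last d) = 1 - ∑ i, (u.coord i / L : ℝ) :=
  Fin.snoc_last ..

lemma sum_point (u : SimplexGrid d L) : ∑ i, u.point i = 1 := by
  simp [Fin.sum_univ_castSucc]

lemma point_nonneg (u : SimplexGrid d L) (i : Fin (d + 1)) : 0 ≤ u.point i := by
  cases i using Fin.lastCases with
  | last =>
    rw [point_last, ← Finset.sum_div, sub_nonneg]
    exact div_le_one_of_le₀ (mod_cast u.sum_coord_le) (Nat.cast_nonneg _)
  | cast i => rw [point_castSucc]; positivity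

lemma point_zero (i : Fin (d + 1)) :
    (0 : SimplexGrid d L).point i = if (i : ℕ) = d then 1 else 0 := by
  cases i using Fin.lastCases with
  | last => simp
  | cast i => simp [i.2.ne]

lemma exists_point_eq_one (hL : 0 < L) (i : Fin (d + 1)) :
    ∃ u : SimplexGrid d L, u.point i = 1 := by
  cases i using Fin.lastCases with
  | last => exact ⟨0, by simp⟩
  | cast i => exact ⟨⟨Pi.single i L, by simp⟩, by simp [hL.ne']⟩

lemma exists_isLevelQuotient {A : Matrix (Fin d) (Fin m) ℝ} (hA : ∀ i j, 0 ≤ A i j)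
    (hA_col : ∀ j, ∑ i, A i j ≤ 1) (hA_row : ∀ i, ∃ j, A i j = 1) (L : ℕ) :
    ∃ φ : SimplexGrid m L → SimplexGrid d L, IsLevelQuotient level level φ ∧
      ∀ w i, |A.mulVec (Nat.cast ∘ w.coord) i - (φ w).coord i| ≤ 1 := by
  have hfloor (w : SimplexGrid m L) := sum_floor_mulVec_natCast_le hA hA_col w.coord
  refine ⟨fun w => ⟨_, (hfloor w).trans w.sum_coord_le⟩, ⟨hfloor, fun u => ?_⟩, fun w i => ?_⟩
  · obtain ⟨w, hw, hwu⟩ := exists_mulVec_eq_natCast hA hA_col hA_row u.coord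
    refine ⟨⟨w, hw.trans_le u.sum_coord_le⟩, SimplexGrid.ext ?_, hw.le⟩
    simp [hwu]
  · have h₁ : (⌊A.mulVec (Nat.cast ∘ w.coord) i⌋₊ : ℝ) ≤ A.mulVec (Nat.cast ∘ w.coord) i :=
      Nat.floor_le (dotProduct_nonneg_of_nonneg (hA i) fun _ => Nat.cast_nonneg _)
    have h₂ := Nat.lt_floor_add_one (A.mulVec (Nat.cast ∘ w.coord) i)
    rw [abs_le]
    constructor <;> linarith

end SimplexGrid

/-! ### Matrices and words -/

section Matrices

variable {d k l m n L : ℕ}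

lemma one_mem_S (k : ℕ) : (1 : Matrix (Fin k) (Fin k) ℝ) ∈ S k k := by
  refine ⟨fun i j => ?_, fun j => by simp [Matrix.one_apply], fun i => ⟨i, by simp⟩,
    fun i j hj => ?_⟩
  · rw [Matrix.one_apply]
    split_ifs <;> norm_num
  · simp only [Matrix.one_apply, Fin.ext_iff, hj]

lemma S_zero_succ (l : ℕ) : S 0 (l + 1) = ∅ :=
  Set.eq_empty_of_forall_notMem fun _ h => (h.2.2.1 0).elim fun j _ => j.elim0

lemma S_succ_zero (k : ℕ) : S (k + 1) 0 = ∅ :=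
  Set.eq_empty_of_forall_notMem fun _ h => by simpa using h.2.1 0

lemma sum_mulVec_of_mem_S {ρ : Matrix (Fin l) (Fin k) ℝ} (hρ : ρ ∈ S k l) (x : Fin k → ℝ) :
    ∑ i, ρ.mulVec x i = ∑ j, x j := by
  simp only [Matrix.mulVec, dotProduct]
  rw [Finset.sum_comm]
  simp only [← Finset.sum_mul, hρ.2.1, one_mul]

lemma apply_castSucc_last_of_mem_S {ρ : Matrix (Fin (d + 1)) (Fin (m + 1)) ℝ}
    (hρ : ρ ∈ S (m + 1) (d + 1)) (i : Fin d) : ρ i.castSucc (Fin.last m) = 0 := by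
  simp [hρ.2.2.2 _ (Fin.last m) (by simp), i.2.ne]

lemma mulVec_point_castSucc_of_mem_S {ρ : Matrix (Fin (d + 1)) (Fin (m + 1)) ℝ}
    (hρ : ρ ∈ S (m + 1) (d + 1)) (w : SimplexGrid m L) (i : Fin d) :
    ρ.mulVec w.point i.castSucc =
      (ρ.submatrix Fin.castSucc Fin.castSucc).mulVec (Nat.cast ∘ w.coord) i / L := by
  simp [Matrix.mulVec, dotProduct, Fin.sum_univ_castSucc, apply_castSucc_last_of_mem_S hρ,
    Finset.sum_div, mul_div_assoc]

lemma exists_isLevelQuotient_of_mem_S {ρ : Matrix (Fin (d + 1)) (Fin (m + 1)) ℝ}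
    (hρ : ρ ∈ S (m + 1) (d + 1)) (L : ℕ) :
    ∃ φ : SimplexGrid m L → SimplexGrid d L,
      IsLevelQuotient SimplexGrid.level SimplexGrid.level φ ∧
      ∀ w i, |ρ.mulVec w.point (Fin.castSucc i) - (φ w).point (Fin.castSucc i)| ≤ 1 / L := by
  have hcol (j : Fin m) : ∑ i : Fin d, ρ i.castSucc j.castSucc ≤ 1 := by
    have hsum := hρ.2.1 j.castSucc
    rw [Fin.sum_univ_castSucc] at hsum
    linarith [hρ.1 (Fin.last d) j.castSucc]
  have hrow (i : Fin d) : ∃ j : Fin m, ρ i.castSucc j.castSucc = 1 := by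
    obtain ⟨j, hj⟩ := hρ.2.2.1 i.castSucc
    cases j using Fin.lastCases with
    | last => exact absurd (apply_castSucc_last_of_mem_S hρ i) (by simp [hj])
    | cast j => exact ⟨j, hj⟩
  obtain ⟨φ, hφ, hround⟩ := SimplexGrid.exists_isLevelQuotient
    (A := ρ.submatrix Fin.castSucc Fin.castSucc) (fun _ _ => hρ.1 _ _) hcol hrow L
  refine ⟨φ, hφ, fun w i => ?_⟩
  rw [mulVec_point_castSucc_of_mem_S hρ, SimplexGrid.point_castSucc, ← sub_div, abs_div,
    Nat.abs_cast]
  exact div_le_div_of_nonneg_right (hround w i) (Nat.cast_nonneg _)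

theorem exists_isFullWord_approx_mulVec (d m L : ℕ) :
    ∃ (K M : ℕ) (P : ℕ → SimplexGrid d L) (Q : ℕ → SimplexGrid m L),
      IsFullWord 0 K P ∧ IsFullWord 0 M Q ∧ ∀ ρ ∈ S (m + 1) (d + 1), ∃ g, IsRigidSurj 1 M K g ∧
        ∀ j, ∑ i, |ρ.mulVec (Q j).point i - (P (g j)).point i| ≤ 4 * d / L := by
  obtain ⟨K, M, P, Q, hP, hQ, hPQ⟩ := exists_isFullWord_isLevelQuotient
    (fun u : SimplexGrid d L => u.level_eq_zero) (fun w : SimplexGrid m L => w.level_eq_zero)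
    fun _ => SimplexGrid.level_demote_lt
  refine ⟨K, M, P, Q, hP, hQ, fun ρ hρ => ?_⟩
  obtain ⟨φ, hφ, hround⟩ := exists_isLevelQuotient_of_mem_S hρ L
  obtain ⟨g, hg, hgφ⟩ := hPQ φ hφ
  refine ⟨g, hg, fun j => ?_⟩
  have hdemote (i : Fin d) :
      |(φ (Q j)).point i.castSucc - (P (g j)).point i.castSucc| ≤ 1 / L := by
    rcases hgφ j with h | h
    · rw [h, sub_self, abs_zero]
      positivity
    · rw [h, SimplexGrid.point_castSucc, SimplexGrid.point_castSucc, ← sub_div, abs_div,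
        Nat.abs_cast]
      exact div_le_div_of_nonneg_right (SimplexGrid.abs_sub_demote_le _ i) (Nat.cast_nonneg _)
  calc ∑ i, |ρ.mulVec (Q j).point i - (P (g j)).point i|
      ≤ 2 * d * (1 / L + 1 / L) := sum_abs_sub_le_of_castSucc
        (by rw [sum_mulVec_of_mem_S hρ, SimplexGrid.sum_point, SimplexGrid.sum_point])
        fun i => (abs_sub_le _ _ _).trans (add_le_add (hround (Q j) i) (hdemote i))
    _ = 4 * d / L := by ring

/-- The matrix whose columns are the points of the word `w 0, …, w (n - 1)`, read backwards because
`S` prescribes the last column while `IsFullWord` prescribes the first letter. -/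
noncomputable def wordMatrix (n : ℕ) (w : ℕ → SimplexGrid d L) : Matrix (Fin (d + 1)) (Fin n) ℝ :=
  Matrix.of fun i j => (w j.rev).point i

lemma wordMatrix_congr {w w' : ℕ → SimplexGrid d L} (h : Set.EqOn w w' (Set.Iio n)) :
    wordMatrix n w = wordMatrix n w' :=
  Matrix.ext fun i j => congrFun (congrArg SimplexGrid.point (h j.rev.2)) i

lemma wordMatrix_mem_S (hL : 0 < L) {w : ℕ → SimplexGrid d L} (hw : IsFullWord 0 n w) :
    wordMatrix n w ∈ S n (d + 1) := by
  refine ⟨fun _ _ => SimplexGrid.point_nonneg _ _, fun _ => SimplexGrid.sum_point _,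
    fun i => ?_, fun i j hj => ?_⟩
  · obtain ⟨u, hu⟩ := SimplexGrid.exists_point_eq_one hL i
    obtain ⟨y, hy, hyu⟩ := hw.2 u
    refine ⟨Fin.rev ⟨y, hy⟩, ?_⟩
    rw [wordMatrix, Matrix.of_apply, Fin.rev_rev, hyu, hu]
  · have hrev : (j.rev : ℕ) = 0 := by
      rw [Fin.val_rev]
      omega
    rw [wordMatrix, Matrix.of_apply, hrev, hw.1, SimplexGrid.point_zero, Nat.add_sub_cancel]

theorem exists_monochromatic_approx_mul (d m : ℕ) {κ : Type u} [Finite κ] [Nonempty κ] {ε : ℝ}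
    (hε : 0 < ε) :
    ∃ n, ∀ c : S n (d + 1) → κ, ∃ γ ∈ S n (m + 1), ∃ v, ∀ ρ ∈ S (m + 1) (d + 1),
      ∃ (ρ' : Matrix (Fin (d + 1)) (Fin n) ℝ) (hρ' : ρ' ∈ S n (d + 1)), c ⟨ρ', hρ'⟩ = v ∧
        ∀ col, ∑ i, |(ρ * γ) i col - ρ' i col| ≤ ε := by
  obtain ⟨L, hL⟩ := exists_nat_gt (4 * d / ε)
  have hL_pos : (0 : ℝ) < L := (by positivity : 0 ≤ 4 * d / ε).trans_lt hL
  have hLε : 4 * d / L ≤ ε := ((div_lt_comm₀ hε hL_pos).mp hL).le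
  rw [Nat.cast_pos] at hL_pos
  obtain ⟨K, M, P, Q, hP, hQ, hPQ⟩ := exists_isFullWord_approx_mulVec d m L
  obtain ⟨_, hK, -⟩ := hP.2 0
  obtain ⟨_, hM, -⟩ := hQ.2 0
  obtain ⟨n, -, hn⟩ := dualRamsey one_pos (Nat.one_le_of_lt hK) M (Nat.one_le_of_lt hM) κ
  refine ⟨n, fun c => ?_⟩
  obtain ⟨f, hf, v, hv⟩ := hn
    (fun h => Function.extend Subtype.val c (fun _ => Classical.arbitrary κ) (wordMatrix n (P ∘ h)))
    fun h h' hh' => congrArg _ (wordMatrix_congr fun y hy => congrArg P (hh' y hy))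
  refine ⟨wordMatrix n (Q ∘ f), wordMatrix_mem_S hL_pos (hQ.comp_isRigidSurj hf), v,
    fun ρ hρ => ?_⟩
  obtain ⟨g, hg, hdist⟩ := hPQ ρ hρ
  have hρ' := wordMatrix_mem_S hL_pos (hP.comp_isRigidSurj (hf.comp hg))
  refine ⟨wordMatrix n (P ∘ g ∘ f), hρ', ?_, fun col => (hdist (f col.rev)).trans hLε⟩
  rw [← hv g hg]
  exact (Subtype.val_injective.extend_apply c _ ⟨_, hρ'⟩).symm

end Matrices

/-- Ramsey-type statement for the sets `S(k,l)` of matrices of trace-preserving positive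
contractive quotient mappings `ℓ₁ᵏ → ℓ₁ˡ` fixing the last coordinate.  The distance
`D(A,B) = max_j ∑_i |A i j - B i j|` is expressed by the condition `∀ j, ∑ i, |A i j - B i j| ≤ ε`. -/
theorem ramsey_tpcq_matrices (d m r : ℕ) (ε : ℝ) (hε : 0 < ε) :
    ∃ n : ℕ, ∀ c : S n d → Fin r,
      ∃ γ ∈ S n m, ∃ j : Fin r,
        ∀ ρ ∈ S m d,
          ∃ (ρ' : Matrix (Fin d) (Fin n) ℝ) (hρ' : ρ' ∈ S n d),
            c ⟨ρ', hρ'⟩ = j ∧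
              ∀ col : Fin n, ∑ i : Fin d, |(ρ * γ) i col - ρ' i col| ≤ ε := by
  rcases Nat.eq_zero_or_pos r with rfl | hr
  · exact ⟨d, fun c => (c ⟨1, one_mem_S d⟩).elim0⟩
  have : NeZero r := ⟨hr.ne'⟩
  match m, d with
  | 0, 0 => exact ⟨0, fun c => ⟨1, one_mem_S 0, c ⟨1, one_mem_S 0⟩, fun _ _ =>
      ⟨1, one_mem_S 0, rfl, fun col => col.elim0⟩⟩⟩
  | 0, d + 1 => exact ⟨0, fun _ => ⟨1, one_mem_S 0, 0, by simp [S_zero_succ]⟩⟩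
  | m + 1, 0 => exact ⟨m + 1, fun _ => ⟨1, one_mem_S (m + 1), 0, by simp [S_succ_zero]⟩⟩
  | m + 1, d + 1 => exact exists_monochromatic_approx_mul d m hε
end

section
/- Let A be a d × n real matrix with nonnegative entries and let φ_A : ℓ₁^n(ℝ) → ℓ₁^d(ℝ) be the induced linear map. Then φ_A maps the closed unit ball of ℓ₁^n(ℝ) onto the closed unit ball of ℓ₁^d(ℝ) and satisfies Σ_{i=1}^d (φ_A a)_i = Σ_{j=1}^n a_j for every a ∈ ℝ^n, if and only if every column of A sums to 1 and every row of A contains an entry equal to 1. -/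
/-- `ℓ₁ⁿ(ℝ)`: the space `ℝⁿ` with the norm given by the sum of the absolute values of the
coordinates. -/
abbrev L1R (n : ℕ) : Type := PiLp 1 (fun _ : Fin n => ℝ)

/-- The linear map `ℓ₁ⁿ(ℝ) → ℓ₁ᵈ(ℝ)` induced by a `d × n` real matrix. -/
def matrixMapL1R {d n : ℕ} (A : Matrix (Fin d) (Fin n) ℝ) (x : L1R n) : L1R d :=
  (WithLp.equiv 1 (Fin d → ℝ)).symm (A.mulVec (WithLp.equiv 1 (Fin n → ℝ) x))

/-!
Every vector of `ℓ₁` is a combination of the coordinate vectors `eⱼ` whose coefficients have total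
size `‖x‖`. Hence a linear map out of `ℓ₁` is contractive as soon as it is so on the `eⱼ`, and a
linear map into `ℓ₁` covers the unit ball as soon as each `eᵢ` lifts to the unit ball. For a
matrix whose columns have norm at most `1`, a lift of `eᵢ` forces an entry of modulus `1` in row
`i`, because `‖(A x)ᵢ‖ ≤ ∑ⱼ ‖Aᵢⱼ‖ ‖xⱼ‖`; conversely such an entry exhausts the norm of its column,
which is therefore a unimodular multiple of `eᵢ`. Finally, columns summing to `1` with norm at most
`1` are nonnegative.
-/

open Metric Matrix

section CoordinateVectors

variable {𝕜 ι E : Type*} [NormedField 𝕜] [Fintype ι]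
  [SeminormedAddCommGroup E] [NormedSpace 𝕜 E]

lemma norm_sum_smul_le_mul_norm {v : ι → E} {C : ℝ} (hv : ∀ i, ‖v i‖ ≤ C)
    (x : PiLp 1 fun _ : ι => 𝕜) : ‖∑ i, x i • v i‖ ≤ C * ‖x‖ := by
  calc ‖∑ i, x i • v i‖ ≤ ∑ i, ‖x i‖ * ‖v i‖ := by
        simpa only [norm_smul] using norm_sum_le Finset.univ fun i => x i • v i
    _ ≤ ∑ i, ‖x i‖ * C := by gcongr with i; exact hv i
    _ = C * ‖x‖ := by rw [← Finset.sum_mul, PiLp.norm_eq_of_L1, mul_comm]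

variable [DecidableEq ι]

lemma sum_smul_single_one {R : Type*} [Ring R] (x : PiLp 1 fun _ : ι => R) :
    ∑ i, x i • PiLp.single 1 i (1 : R) = x := by
  simpa using (PiLp.basisFun 1 R ι).sum_repr x

lemma map_eq_sum_smul_map_single_one (L : PiLp 1 (fun _ : ι => 𝕜) →ₗ[𝕜] E)
    (x : PiLp 1 fun _ : ι => 𝕜) : L x = ∑ i, x i • L (PiLp.single 1 i 1) := by
  simp only [← map_smul, ← map_sum, sum_smul_single_one]

theorem image_closedBall_subset_iff_norm_map_single_le (L : PiLp 1 (fun _ : ι => 𝕜) →ₗ[𝕜] E) :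
    L '' closedBall 0 1 ⊆ closedBall 0 1 ↔ ∀ i, ‖L (PiLp.single 1 i 1)‖ ≤ 1 := by
  simp only [← Set.mapsTo_iff_image_subset, Set.MapsTo, mem_closedBall_zero_iff]
  refine ⟨fun h i => h (by simp), fun h x hx => ?_⟩
  rw [map_eq_sum_smul_map_single_one]
  exact (norm_sum_smul_le_mul_norm h x).trans (by rwa [one_mul])

theorem closedBall_subset_image_iff_exists_map_eq_single
    (L : E →ₗ[𝕜] PiLp 1 fun _ : ι => 𝕜) :
    closedBall 0 1 ⊆ L '' closedBall 0 1 ↔ ∀ i, ∃ x, ‖x‖ ≤ 1 ∧ L x = PiLp.single 1 i 1 := by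
  simp only [Set.subset_def, Set.mem_image, mem_closedBall_zero_iff]
  refine ⟨fun h i => h _ (by simp), fun h y hy => ?_⟩
  choose v hv hLv using h
  refine ⟨∑ i, y i • v i, (norm_sum_smul_le_mul_norm hv y).trans (by rwa [one_mul]), ?_⟩
  simp only [map_sum, map_smul, hLv, sum_smul_single_one]

end CoordinateVectors

section FiniteSums

variable {ι : Type*} [Fintype ι]

lemma eq_single_of_sum_norm_le [DecidableEq ι] {E : Type*} [NormedAddCommGroup E] {v : ι → E}
    {i : ι} (h : ∑ k, ‖v k‖ ≤ ‖v i‖) : v = Pi.single i (v i) := by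
  ext k
  obtain rfl | hk := eq_or_ne k i
  · simp
  have hle : ‖v k‖ + ‖v i‖ ≤ ∑ l, ‖v l‖ :=
    Finset.add_le_sum (fun l _ => norm_nonneg (v l)) (Finset.mem_univ k) (Finset.mem_univ i) hk
  rw [Pi.single_eq_of_ne hk, ← norm_le_zero_iff]
  linarith

lemma exists_le_norm_of_mul_sum_norm_le_norm_dotProduct {R : Type*} [NonUnitalNormedRing R]
    {a x : ι → R} {c : ℝ} (hx : x ≠ 0) (h : c * ∑ j, ‖x j‖ ≤ ‖a ⬝ᵥ x‖) : ∃ j, c ≤ ‖a j‖ := by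
  by_contra! ha
  obtain ⟨k, hk⟩ := Function.ne_iff.mp hx
  refine h.not_gt ?_
  calc ‖a ⬝ᵥ x‖ ≤ ∑ j, ‖a j‖ * ‖x j‖ :=
        norm_sum_le_of_le _ fun j _ => norm_mul_le (a j) (x j)
    _ < ∑ j, c * ‖x j‖ :=
        Finset.sum_lt_sum (fun j _ => by gcongr; exact (ha j).le)
          ⟨k, Finset.mem_univ k, mul_lt_mul_of_pos_right (ha k) (norm_pos_iff.mpr hk)⟩
    _ = c * ∑ j, ‖x j‖ := (Finset.mul_sum _ _ _).symm

open scoped ComplexOrder in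
lemma nonneg_of_sum_norm_le_re_sum {𝕜 : Type*} [RCLike 𝕜] {z : ι → 𝕜}
    (h : ∑ i, ‖z i‖ ≤ RCLike.re (∑ i, z i)) (i : ι) : 0 ≤ z i := by
  rw [map_sum] at h
  have hre : RCLike.re (z i) = ‖z i‖ :=
    (Finset.sum_eq_sum_iff_of_le fun k _ => RCLike.re_le_norm (z k)).mp
      (le_antisymm (Finset.sum_le_sum fun k _ => RCLike.re_le_norm (z k)) h) i (Finset.mem_univ i)
  rw [← RCLike.re_eq_self_of_le hre.ge, hre]
  exact RCLike.ofReal_nonneg.mpr (norm_nonneg _)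

end FiniteSums

section Matrices

variable {m n : Type*} [Fintype m] [Fintype n]

lemma sum_mulVec_eq_sum_iff {R : Type*} [NonAssocSemiring R] (A : Matrix m n R) :
    (∀ a, ∑ i, (A *ᵥ a) i = ∑ j, a j) ↔ ∀ j, ∑ i, A i j = 1 := by
  classical
  constructor
  · intro h j
    simpa using h (Pi.single j 1)
  · intro h a
    simp_rw [mulVec, dotProduct]
    rw [Finset.sum_comm]
    simp_rw [← Finset.sum_mul, h, one_mul]

variable [DecidableEq n]

section NormedField

variable {𝕜 : Type*} [NormedField 𝕜]

lemma norm_toLpLin_one_single_one (A : Matrix m n 𝕜) (j : n) :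
    ‖toLpLin 1 1 A (PiLp.single 1 j 1)‖ = ∑ i, ‖A i j‖ := by
  simp [PiLp.norm_eq_of_L1, toLpLin_apply]

lemma exists_toLpLin_eq_single_iff [DecidableEq m] {A : Matrix m n 𝕜}
    (hA : ∀ j, ∑ i, ‖A i j‖ ≤ 1) (i : m) :
    (∃ x, ‖x‖ ≤ 1 ∧ toLpLin 1 1 A x = PiLp.single 1 i 1) ↔ ∃ j, ‖A i j‖ = 1 := by
  constructor
  · rintro ⟨x, hx, hAx⟩
    have hrow : A.row i ⬝ᵥ x.ofLp = 1 := by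
      simpa [toLpLin_apply, mulVec, Matrix.row] using congr($hAx i)
    have hx0 : x.ofLp ≠ 0 := by
      intro h
      simp [h] at hrow
    obtain ⟨j, hj⟩ : ∃ j, 1 ≤ ‖A i j‖ :=
      exists_le_norm_of_mul_sum_norm_le_norm_dotProduct (a := A.row i) hx0 <| by
        rwa [hrow, norm_one, one_mul, ← PiLp.norm_eq_of_L1]
    have hle : ‖A i j‖ ≤ ∑ k, ‖A k j‖ :=
      Finset.single_le_sum (f := fun k => ‖A k j‖) (fun k _ => norm_nonneg _) (Finset.mem_univ i)
    exact ⟨j, (hle.trans (hA j)).antisymm hj⟩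
  · rintro ⟨j, hj⟩
    have hcol : A.col j = Pi.single i (A i j) := eq_single_of_sum_norm_le ((hA j).trans_eq hj.symm)
    have hne : A i j ≠ 0 := norm_ne_zero_iff.mp (hj ▸ one_ne_zero)
    refine ⟨PiLp.single 1 j (A i j)⁻¹, by simp [hj], ?_⟩
    simp [toLpLin_apply, hcol, ← Pi.single_smul, hne]

theorem image_closedBall_toLpLin_eq_iff (A : Matrix m n 𝕜) :
    toLpLin 1 1 A '' closedBall 0 1 = closedBall 0 1 ↔
      (∀ j, ∑ i, ‖A i j‖ ≤ 1) ∧ ∀ i, ∃ j, ‖A i j‖ = 1 := by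
  classical
  rw [Set.Subset.antisymm_iff, image_closedBall_subset_iff_norm_map_single_le,
    closedBall_subset_image_iff_exists_map_eq_single]
  simp only [norm_toLpLin_one_single_one]
  exact and_congr_right fun hA => forall_congr' (exists_toLpLin_eq_single_iff hA)

end NormedField

open scoped ComplexOrder in
theorem matrix_tp_contractive_quotient_iff_general {𝕜 : Type*} [RCLike 𝕜] (A : Matrix m n 𝕜) :
    (toLpLin 1 1 A '' closedBall 0 1 = closedBall 0 1 ∧
        ∀ a : n → 𝕜, ∑ i, (A *ᵥ a) i = ∑ j, a j) ↔
      (∀ i j, 0 ≤ A i j) ∧ (∀ j, ∑ i, A i j = 1) ∧ ∀ i, ∃ j, A i j = 1 := by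
  rw [image_closedBall_toLpLin_eq_iff, sum_mulVec_eq_sum_iff]
  constructor
  · rintro ⟨⟨hnorm, hrow⟩, hcol⟩
    have hA : ∀ i j, 0 ≤ A i j := fun i j =>
      nonneg_of_sum_norm_le_re_sum (by rw [hcol j, RCLike.one_re]; exact hnorm j) i
    exact ⟨hA, hcol, fun i => (hrow i).imp fun j hj => by
      rw [← RCLike.norm_of_nonneg' (hA i j), hj, RCLike.ofReal_one]⟩
  · rintro ⟨hA, hcol, hrow⟩
    refine ⟨⟨fun j => ?_, fun i => (hrow i).imp fun j hj => by rw [hj, norm_one]⟩, hcol⟩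
    have hsum : ((∑ i, ‖A i j‖ : ℝ) : 𝕜) = 1 := by
      simp only [RCLike.ofReal_sum, RCLike.norm_of_nonneg' (hA _ j), hcol]
    exact_mod_cast hsum.le

end Matrices

lemma matrixMapL1R_eq_toLpLin {d n : ℕ} (A : Matrix (Fin d) (Fin n) ℝ) :
    matrixMapL1R A = toLpLin 1 1 A :=
  rfl

/-- A `d × n` real matrix `A` with nonnegative entries induces a map `ℓ₁ⁿ(ℝ) → ℓ₁ᵈ(ℝ)` which is
a contractive quotient mapping (the closed unit ball is mapped onto the closed unit ball) and
preserves the sum of the coordinates if and only if every column of `A` sums to `1` and every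
row of `A` contains an entry equal to `1`. -/
theorem matrix_tp_contractive_quotient_iff (d n : ℕ) (A : Matrix (Fin d) (Fin n) ℝ)
    (hA : ∀ i j, 0 ≤ A i j) :
    (matrixMapL1R A '' Metric.closedBall 0 1 = Metric.closedBall 0 1 ∧
        ∀ a : Fin n → ℝ, ∑ i : Fin d, A.mulVec a i = ∑ j : Fin n, a j) ↔
      ((∀ j : Fin n, ∑ i : Fin d, A i j = 1) ∧ (∀ i : Fin d, ∃ j : Fin n, A i j = 1)) :=
  matrixMapL1R_eq_toLpLin A ▸
    (matrix_tp_contractive_quotient_iff_general A).trans (and_iff_right hA)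
end

section
/- Let H and K be finite-dimensional complex inner product spaces with dim H ≤ dim K, let δ ≥ 0, and let T : H → K be a linear map such that ‖T(x)‖ ≤ ‖x‖ and ‖x‖ ≤ (1+δ)‖T(x)‖ for all x ∈ H. Then there exists a linear isometry U : H → K such that ‖T − U‖ ≤ δ, where ‖·‖ denotes the operator norm. -/
/-!
Write `T = U ∘ P` with `P = (T†T)^{1/2}`. The hypotheses squeeze the quadratic form of `T†T`
between `c²` and `1`, where `c = (1 + δ)⁻¹`, so `‖1 - T†T‖ ≤ 1 - c² < 1`. In a Banach star algebra,
a self-adjoint `a` this close to `1` has a self-adjoint square root `1 - y` with `‖y‖ ≤ 1 - c`: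
the equation `(1 - y)² = a` says that `y` is a fixed point of `y ↦ ((1 - a) + y²) / 2`, which maps
the ball of radius `1 - c` into itself and contracts it. Since `P = 1 - y` is invertible,
`U = T ∘ P⁻¹` is an isometry, and `‖T - U‖ = ‖U ∘ (P - 1)‖ ≤ 1 - c = δ / (1 + δ)`.
-/

open scoped InnerProductSpace

section SquareRoot

theorem norm_mul_self_sub_mul_self_le {A : Type*} [NonUnitalSeminormedRing A] (x y : A) :
    ‖x * x - y * y‖ ≤ (‖x‖ + ‖y‖) * ‖x - y‖ :=
  calc ‖x * x - y * y‖ = ‖x * (x - y) + (x - y) * y‖ := by noncomm_ring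
    _ ≤ ‖x‖ * ‖x - y‖ + ‖x - y‖ * ‖y‖ :=
      norm_add_le_of_le (norm_mul_le _ _) (norm_mul_le _ _)
    _ = (‖x‖ + ‖y‖) * ‖x - y‖ := by ring

variable (𝕜 : Type*) {A : Type*} [RCLike 𝕜]

theorem norm_half_smul_add_mul_self_le [NonUnitalSeminormedRing A] [NormedSpace 𝕜 A] {a y : A}
    {c : ℝ} (ha : ‖a‖ ≤ 1 - c ^ 2) (hy : ‖y‖ ≤ 1 - c) :
    ‖(2⁻¹ : 𝕜) • (a + y * y)‖ ≤ 1 - c := by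
  have hyy : ‖y * y‖ ≤ (1 - c) * (1 - c) := norm_mul_le_of_le hy hy
  calc ‖(2⁻¹ : 𝕜) • (a + y * y)‖ = 2⁻¹ * ‖a + y * y‖ := by
        rw [norm_smul, norm_inv, RCLike.norm_ofNat]
    _ ≤ 2⁻¹ * ((1 - c ^ 2) + (1 - c) * (1 - c)) := by
        gcongr
        exact norm_add_le_of_le ha hyy
    _ = 1 - c := by ring

theorem dist_half_smul_add_mul_self_le [NonUnitalSeminormedRing A] [NormedSpace 𝕜 A] (a : A)
    {x y : A} {r : ℝ} (hx : ‖x‖ ≤ r) (hy : ‖y‖ ≤ r) :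
    dist ((2⁻¹ : 𝕜) • (a + x * x)) ((2⁻¹ : 𝕜) • (a + y * y)) ≤ r * dist x y :=
  calc dist ((2⁻¹ : 𝕜) • (a + x * x)) ((2⁻¹ : 𝕜) • (a + y * y))
      = 2⁻¹ * ‖x * x - y * y‖ := by
        rw [dist_smul₀, dist_add_left, dist_eq_norm, norm_inv, RCLike.norm_ofNat]
    _ ≤ 2⁻¹ * ((r + r) * ‖x - y‖) := by
        gcongr
        exact (norm_mul_self_sub_mul_self_le x y).trans (by gcongr)
    _ = r * dist x y := by
        rw [dist_eq_norm]
        ring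

theorem exists_isSelfAdjoint_half_smul_add_mul_self_eq [NonUnitalNormedRing A] [NormedSpace 𝕜 A]
    [CompleteSpace A] [StarRing A] [ContinuousStar A] [StarModule 𝕜 A] {a : A}
    (ha : IsSelfAdjoint a) {c : ℝ} (hc₀ : 0 < c) (hc₁ : c ≤ 1) (hac : ‖a‖ ≤ 1 - c ^ 2) :
    ∃ y : A, IsSelfAdjoint y ∧ ‖y‖ ≤ 1 - c ∧ (2⁻¹ : 𝕜) • (a + y * y) = y := by
  let f : A → A := fun y => (2⁻¹ : 𝕜) • (a + y * y)
  let s : Set A := {y | IsSelfAdjoint y ∧ ‖y‖ ≤ 1 - c}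
  have hs : IsComplete s :=
    ((isClosed_eq continuous_star continuous_id).inter
      (isClosed_le continuous_norm continuous_const)).isComplete
  have hhalf : IsSelfAdjoint (2⁻¹ : 𝕜) := (IsSelfAdjoint.ofNat 2).inv₀
  have hfs : Set.MapsTo f s s := fun y ⟨hy, hyc⟩ =>
    ⟨hhalf.smul (ha.add ((hy.commute_iff hy).1 (.refl y))),
      norm_half_smul_add_mul_self_le 𝕜 hac hyc⟩
  have hf : ContractingWith ⟨1 - c, sub_nonneg.2 hc₁⟩ (hfs.restrict f s s) :=
    ⟨sub_lt_self 1 hc₀, LipschitzWith.of_dist_le_mul fun x y =>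
      dist_half_smul_add_mul_self_le 𝕜 a x.2.2 y.2.2⟩
  have h0 : (0 : A) ∈ s := ⟨.zero A, by simpa using hc₁⟩
  obtain ⟨y, hy, hfy, -⟩ := hf.exists_fixedPoint' hs hfs h0 (edist_ne_top _ _)
  exact ⟨y, hy.1, hy.2, hfy⟩

theorem exists_isSelfAdjoint_mul_self_eq_of_norm_one_sub_le [NormedRing A] [NormedAlgebra 𝕜 A]
    [CompleteSpace A] [StarRing A] [ContinuousStar A] [StarModule 𝕜 A] {a : A}
    (ha : IsSelfAdjoint a) {c : ℝ} (hc₀ : 0 < c) (hc₁ : c ≤ 1) (hac : ‖1 - a‖ ≤ 1 - c ^ 2) :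
    ∃ b : A, IsSelfAdjoint b ∧ b * b = a ∧ ‖1 - b‖ ≤ 1 - c := by
  obtain ⟨y, hy, hyc, hfix⟩ :=
    exists_isSelfAdjoint_half_smul_add_mul_self_eq 𝕜 ((IsSelfAdjoint.one A).sub ha) hc₀ hc₁ hac
  refine ⟨1 - y, (IsSelfAdjoint.one A).sub hy, ?_, by rwa [sub_sub_cancel]⟩
  have hquad : 1 - a + y * y = y + y := by
    rw [← two_smul 𝕜 y, ← inv_smul_eq_iff₀ two_ne_zero, hfix]
  calc (1 - y) * (1 - y) = 1 - (y + y) + y * y := by noncomm_ring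
    _ = a := by rw [← hquad]; abel

end SquareRoot

section Polar

theorem exists_linearIsometry_comp_eq_of_isUnit {𝕜 E F : Type*} [Semiring 𝕜]
    [SeminormedAddCommGroup E] [Module 𝕜 E] [SeminormedAddCommGroup F] [Module 𝕜 F]
    {T : E →L[𝕜] F} {P : E →L[𝕜] E} (hP : IsUnit P) (hTP : ∀ x, ‖T x‖ = ‖P x‖) :
    ∃ U : E →ₗᵢ[𝕜] F, U.toContinuousLinearMap ∘L P = T := by
  obtain ⟨Q, hPQ, hQP⟩ := isUnit_iff_exists.1 hP
  refine ⟨⟨(T ∘L Q).toLinearMap, fun x => ?_⟩, ContinuousLinearMap.ext fun x => ?_⟩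
  · exact (hTP (Q x)).trans (congrArg norm (DFunLike.congr_fun hPQ x))
  · exact congrArg T (DFunLike.congr_fun hQP x)

variable {𝕜 H K : Type*} [RCLike 𝕜] [NormedAddCommGroup H] [InnerProductSpace 𝕜 H]
  [CompleteSpace H] [NormedAddCommGroup K] [InnerProductSpace 𝕜 K]

/-- The Gram operator `T†T` of `T`, i.e. the operator representing the form `⟪T x, T y⟫`. It is
defined by Riesz representation on `H`, since the adjoint `T†` would require `K` to be complete. -/
noncomputable def gramOperator (T : H →L[𝕜] K) : H →L[𝕜] H :=
  InnerProductSpace.continuousLinearMapOfBilin ((innerSL 𝕜).bilinearComp T T)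

theorem inner_gramOperator_left (T : H →L[𝕜] K) (x y : H) :
    ⟪gramOperator T x, y⟫_𝕜 = ⟪T x, T y⟫_𝕜 :=
  InnerProductSpace.continuousLinearMapOfBilin_apply _ x y

theorem isSelfAdjoint_gramOperator (T : H →L[𝕜] K) : IsSelfAdjoint (gramOperator T) := by
  refine ContinuousLinearMap.isSelfAdjoint_iff_isSymmetric.2 fun x y => ?_
  change ⟪gramOperator T x, y⟫_𝕜 = ⟪x, gramOperator T y⟫_𝕜
  rw [← inner_conj_symm x, inner_gramOperator_left, inner_gramOperator_left, inner_conj_symm]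

theorem reApplyInnerSelf_one_sub_gramOperator (T : H →L[𝕜] K) (x : H) :
    (1 - gramOperator T).reApplyInnerSelf x = ‖x‖ ^ 2 - ‖T x‖ ^ 2 := by
  rw [ContinuousLinearMap.reApplyInnerSelf_apply, sub_apply, inner_sub_left,
    inner_gramOperator_left, map_sub, one_apply_eq_self, inner_self_eq_norm_sq,
    inner_self_eq_norm_sq]

theorem norm_le_of_abs_reApplyInnerSelf_le {E : Type*} [NormedAddCommGroup E]
    [InnerProductSpace 𝕜 E] {S : E →L[𝕜] E} (hS : S.IsSymmetric) {m : ℝ} (hm : 0 ≤ m)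
    (h : ∀ x, |S.reApplyInnerSelf x| ≤ m * ‖x‖ ^ 2) : ‖S‖ ≤ m := by
  rw [S.norm_eq_iSup_rayleighQuotient hS]
  refine Real.iSup_le (fun x => ?_) hm
  rw [ContinuousLinearMap.rayleighQuotient, abs_div, abs_of_nonneg (sq_nonneg ‖x‖)]
  exact div_le_of_le_mul₀ (sq_nonneg _) hm (h x)

theorem norm_one_sub_gramOperator_le {T : H →L[𝕜] K} {c : ℝ} (hc₀ : 0 ≤ c) (hc₁ : c ≤ 1)
    (hle : ∀ x, ‖T x‖ ≤ ‖x‖) (hge : ∀ x, c * ‖x‖ ≤ ‖T x‖) :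
    ‖1 - gramOperator T‖ ≤ 1 - c ^ 2 := by
  have hsymm := ((IsSelfAdjoint.one _).sub (isSelfAdjoint_gramOperator T)).isSymmetric
  refine norm_le_of_abs_reApplyInnerSelf_le hsymm (sub_nonneg.2 (pow_le_one₀ hc₀ hc₁)) fun x => ?_
  have hupper : ‖T x‖ ^ 2 ≤ ‖x‖ ^ 2 := by gcongr; exact hle x
  have hlower : c ^ 2 * ‖x‖ ^ 2 ≤ ‖T x‖ ^ 2 := by rw [← mul_pow]; gcongr; exact hge x
  rw [reApplyInnerSelf_one_sub_gramOperator, abs_of_nonneg (sub_nonneg.2 hupper)]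
  linarith

theorem norm_apply_eq_of_mul_self_eq_gramOperator {T : H →L[𝕜] K} {P : H →L[𝕜] H}
    (hP : IsSelfAdjoint P) (hPT : P * P = gramOperator T) (x : H) : ‖T x‖ = ‖P x‖ := by
  have hinner : ⟪T x, T x⟫_𝕜 = ⟪P x, P x⟫_𝕜 := by
    rw [← inner_gramOperator_left, ← hPT]
    exact hP.isSymmetric (P x) x
  rw [norm_eq_sqrt_re_inner (𝕜 := 𝕜), hinner, ← norm_eq_sqrt_re_inner]

theorem exists_linearIsometry_norm_sub_le {T : H →L[𝕜] K} {c : ℝ} (hc₀ : 0 < c) (hc₁ : c ≤ 1)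
    (hle : ∀ x, ‖T x‖ ≤ ‖x‖) (hge : ∀ x, c * ‖x‖ ≤ ‖T x‖) :
    ∃ U : H →ₗᵢ[𝕜] K, ‖T - U.toContinuousLinearMap‖ ≤ 1 - c := by
  obtain ⟨P, hP, hPT, hP1⟩ := exists_isSelfAdjoint_mul_self_eq_of_norm_one_sub_le 𝕜
    (isSelfAdjoint_gramOperator T) hc₀ hc₁ (norm_one_sub_gramOperator_le hc₀.le hc₁ hle hge)
  have hPunit : IsUnit P := by
    simpa only [sub_sub_cancel] using
      isUnit_one_sub_of_norm_lt_one (hP1.trans_lt (sub_lt_self 1 hc₀))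
  obtain ⟨U, hU⟩ := exists_linearIsometry_comp_eq_of_isUnit hPunit
    (norm_apply_eq_of_mul_self_eq_gramOperator hP hPT)
  refine ⟨U, ?_⟩
  calc ‖T - U.toContinuousLinearMap‖ = ‖U.toContinuousLinearMap ∘L (P - 1)‖ := by
        rw [ContinuousLinearMap.comp_sub, hU]; rfl
    _ = ‖1 - P‖ := by rw [U.norm_toContinuousLinearMap_comp, norm_sub_rev]
    _ ≤ 1 - c := hP1

theorem deltaEmbedding_close_to_isometry_general {δ : ℝ} (hδ : 0 ≤ δ) {T : H →L[𝕜] K}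
    (hT : ∀ x, ‖T x‖ ≤ ‖x‖ ∧ ‖x‖ ≤ (1 + δ) * ‖T x‖) :
    ∃ U : H →ₗᵢ[𝕜] K, ‖T - U.toContinuousLinearMap‖ ≤ δ / (1 + δ) := by
  have hpos : 0 < 1 + δ := by linarith
  obtain ⟨U, hU⟩ := exists_linearIsometry_norm_sub_le (inv_pos.2 hpos)
    (inv_le_one_of_one_le₀ (by linarith)) (fun x => (hT x).1)
    (fun x => (inv_mul_le_iff₀ hpos).2 (hT x).2)
  refine ⟨U, hU.trans_eq ?_⟩
  field_simp
  ring

end Polar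

/-- Every linear `δ`-embedding between finite-dimensional complex inner product spaces
(with the dimension of the domain at most that of the codomain) is within operator-norm
distance `δ` of a linear isometry. -/
theorem deltaEmbedding_close_to_isometry
    (H K : Type*) [NormedAddCommGroup H] [InnerProductSpace ℂ H] [FiniteDimensional ℂ H]
    [NormedAddCommGroup K] [InnerProductSpace ℂ K] [FiniteDimensional ℂ K]
    (hdim : Module.finrank ℂ H ≤ Module.finrank ℂ K)
    (δ : ℝ) (hδ : 0 ≤ δ) (T : H →L[ℂ] K)
    (hT : ∀ x : H, ‖T x‖ ≤ ‖x‖ ∧ ‖x‖ ≤ (1 + δ) * ‖T x‖) :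
    ∃ U : H →L[ℂ] K, (∀ x : H, ‖U x‖ = ‖x‖) ∧ ‖T - U‖ ≤ δ :=
  have : CompleteSpace H := FiniteDimensional.complete ℂ H
  have ⟨U, hU⟩ := deltaEmbedding_close_to_isometry_general hδ hT
  ⟨U.toContinuousLinearMap, U.norm_map, hU.trans (div_le_self hδ (by linarith))⟩
end
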